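/- arXiv:1609.01485 — 6 statements merged into one kernel-verified Lean document; each statement's English description precedes it below -/
import Mathlib

section
/- Let S be the set of pairs (m, λ) ∈ ℤ × ℝ with λ > 0 such that there exists a twice continuously differentiable function f : [−L, L] → ℝ, not identically zero, satisfying f''(x) = (m² + λ·cosh²(x) − 2/cosh²(x))·f(x) for all x ∈ [−L, L], together with the Robin boundary conditions f(L) = L·f'(L) and f(−L) = −L·f'(−L). Then there exist real numbers λ₀, λ₁ ∈ (0, 3) with λ₀ ≠ λ₁ and λ₂ ∈ (0, 2) such that S = {(0, λ₀), (0, λ₁), (1, λ₂), (−1, λ₂)}, and for each (m, λ) ∈ S the real vector space of solutions of this boundary value problem is one-dimensional. (Consequently the Morse index of the critical catenoid, which counts these solutions with the Fourier modes m = ±1 contributing separately, equals 4.) -/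
/-! Write `M = m²`, `q_λ = M + λ cosh² - 2 / cosh²`, and let `U_λ`, `W_λ` be the even and odd
solutions of `f'' = q_λ f` normalized by `(f, f')(0) = (1, 0)` and `(0, 1)`. By symmetry, the Robin
problem has a nontrivial solution exactly when one of the Robin functions
`F_e(λ) = U_λ(L) - L U_λ'(L)`, `F_o(λ) = W_λ(L) - L W_λ'(L)` vanishes; they never vanish together
(`not_both`), so the solution space is then spanned by `U_λ` or by `W_λ`.

The zeros are located with Sturm comparison on `[0, L]` (`compare`): if `h'' = p h` with `h > 0`,
`f'' = q f` with `q > p`, and `f`, `h` have proportional data at `0`, then `f > 0` and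
`f h' < f' h` at `L`.

* Comparison with `cosh` and `sinh`, which solve `h'' = h`, gives `F_e, F_o < 0` as soon as `q > 1`
  (`robin_neg_of_one_lt`); here `cosh` satisfies the Robin condition because `L tanh L = 1`.
  This excludes `|m| ≥ 2` and gives the upper bounds `3` for `m = 0` and `2` for `|m| = 1`.
* At `λ = 0` the solutions are elementary: `1 - x tanh x` and `tanh x` for `m = 0`, `1 / cosh x` and
  (up to a factor) `sinh x + x / cosh x` for `|m| = 1`. For the first three the Robin function is
  positive at `λ = 0`, so by continuity in `λ` it has a positive zero, and comparing the
  solutions for two parameters shows that this zero is unique (`exists_unique_zero`). The last one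
  satisfies the Robin condition exactly, so comparison with it leaves no odd eigenfunction with
  `λ > 0` (`robin_neg_one_odd`).

Existence and continuous dependence for the linear equation come from Picard–Lindelöf applied to a
truncated vector field, together with the growth estimate `energy_growth`. -/

/-- `f` (with derivative `f'`) is a twice continuously differentiable solution on `[-L, L]`
of the Fourier-mode-`m` Jacobi equation
`f'' = (m² + λ cosh²x − 2/cosh²x) f` with the Robin boundary conditions
`f L = L f' L` and `f (-L) = -L f' (-L)`. -/
def SolBVP (L : ℝ) (m : ℤ) (lam : ℝ) (f f' : ℝ → ℝ) : Prop :=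
  (∀ x ∈ Set.Icc (-L) L, HasDerivWithinAt f (f' x) (Set.Icc (-L) L) x) ∧
  (∀ x ∈ Set.Icc (-L) L, HasDerivWithinAt f'
      (((m : ℝ) ^ 2 + lam * Real.cosh x ^ 2 - 2 / Real.cosh x ^ 2) * f x) (Set.Icc (-L) L) x) ∧
  f L = L * f' L ∧ f (-L) = -L * f' (-L)

/-- `f` is not identically zero on `[-L, L]`. -/
def Nontriv (L : ℝ) (f : ℝ → ℝ) : Prop :=
  ∃ x ∈ Set.Icc (-L) L, f x ≠ 0
open Set Filter Topology

/-! ### The linear equation on `[-L, L]` -/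

/-- `f`, with derivative `g`, solves `f'' = q f` on `[-L, L]`; derivatives are one-sided at the
endpoints. -/
def Sol (q : ℝ → ℝ) (L : ℝ) (f g : ℝ → ℝ) : Prop :=
  ∀ x ∈ Icc (-L) L, HasDerivWithinAt f (g x) (Icc (-L) L) x ∧
    HasDerivWithinAt g (q x * f x) (Icc (-L) L) x

/-- Two-sided Grönwall estimate. It is applied to energies such as `f² + g²` and yields uniqueness,
the a priori bound behind existence, and continuity in the spectral parameter. -/
lemma energy_growth {L K : ℝ} {E E' : ℝ → ℝ}
    (hE : ∀ x ∈ Icc (-L) L, HasDerivWithinAt E (E' x) (Icc (-L) L) x)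
    (hK : ∀ x ∈ Icc (-L) L, |E' x| ≤ K * E x) {x y : ℝ}
    (hx : x ∈ Icc (-L) L) (hy : y ∈ Icc (-L) L) :
    E x ≤ E y * Real.exp (K * |x - y|) := by
  have hexp : ∀ c x : ℝ, HasDerivAt (fun t => Real.exp (c * t)) (Real.exp (c * x) * c) x :=
    fun c x => by simpa using ((hasDerivAt_id x).const_mul c).exp
  have hd : ∀ c : ℝ, ∀ x ∈ Icc (-L) L, HasDerivWithinAt (fun t => E t * Real.exp (c * t))
      (E' x * Real.exp (c * x) + E x * (Real.exp (c * x) * c)) (Icc (-L) L) x :=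
    fun c x hx => (hE x hx).mul (hexp c x).hasDerivWithinAt
  have hc : ∀ c : ℝ, ContinuousOn (fun t => E t * Real.exp (c * t)) (Icc (-L) L) :=
    fun c x hx => (hd c x hx).continuousWithinAt
  have hanti : AntitoneOn (fun t => E t * Real.exp (-K * t)) (Icc (-L) L) := by
    refine antitoneOn_of_hasDerivWithinAt_nonpos (convex_Icc _ _) (hc _)
      (fun x hx => (hd _ x (interior_subset hx)).mono interior_subset) fun x hx => ?_
    have := (abs_le.1 (hK x (interior_subset hx))).2
    nlinarith [Real.exp_pos (-K * x)]
  have hmono : MonotoneOn (fun t => E t * Real.exp (K * t)) (Icc (-L) L) := by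
    refine monotoneOn_of_hasDerivWithinAt_nonneg (convex_Icc _ _) (hc _)
      (fun x hx => (hd _ x (interior_subset hx)).mono interior_subset) fun x hx => ?_
    have := (abs_le.1 (hK x (interior_subset hx))).1
    nlinarith [Real.exp_pos (K * x)]
  rcases le_total y x with h | h
  · have h1 := hanti hy hx h
    simp only at h1
    rw [abs_of_nonneg (by linarith)]
    have h2 := mul_le_mul_of_nonneg_right h1 (Real.exp_pos (K * x)).le
    rw [mul_assoc, mul_assoc, ← Real.exp_add, ← Real.exp_add] at h2
    have e1 : -K * x + K * x = 0 := by ring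
    have e2 : -K * y + K * x = K * (x - y) := by ring
    rwa [e1, e2, Real.exp_zero, mul_one] at h2
  · have h1 := hmono hx hy h
    simp only at h1
    rw [abs_of_nonpos (by linarith)]
    have h2 := mul_le_mul_of_nonneg_right h1 (Real.exp_pos (-K * x)).le
    rw [mul_assoc, mul_assoc, ← Real.exp_add, ← Real.exp_add] at h2
    have e1 : K * x + -K * x = 0 := by ring
    have e2 : K * y + -K * x = K * -(x - y) := by ring
    rwa [e1, e2, Real.exp_zero, mul_one] at h2

lemma exists_bound {q : ℝ → ℝ} {L : ℝ} (hq : ContinuousOn q (Icc (-L) L)) :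
    ∃ B, 0 ≤ B ∧ ∀ x ∈ Icc (-L) L, |q x| ≤ B := by
  obtain ⟨B, hB⟩ := isCompact_Icc.exists_bound_of_continuousOn hq
  exact ⟨max B 0, le_max_right _ _, fun x hx => (hB x hx).trans (le_max_left _ _)⟩

lemma Sol.continuousOn {q : ℝ → ℝ} {L : ℝ} {f g : ℝ → ℝ} (h : Sol q L f g) :
    ContinuousOn f (Icc (-L) L) := fun x hx => (h x hx).1.continuousWithinAt

lemma Sol.continuousOn' {q : ℝ → ℝ} {L : ℝ} {f g : ℝ → ℝ} (h : Sol q L f g) :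
    ContinuousOn g (Icc (-L) L) := fun x hx => (h x hx).2.continuousWithinAt

lemma Sol.lin {q : ℝ → ℝ} {L : ℝ} {f g u v : ℝ → ℝ} (h : Sol q L f g) (k : Sol q L u v)
    (a b : ℝ) : Sol q L (fun x => a * f x + b * u x) (fun x => a * g x + b * v x) := by
  intro x hx
  refine ⟨((h x hx).1.const_mul a).add ((k x hx).1.const_mul b), ?_⟩
  refine (((h x hx).2.const_mul a).add ((k x hx).2.const_mul b)).congr_deriv ?_
  ring

lemma Sol.reflect {q : ℝ → ℝ} {L : ℝ} {f g : ℝ → ℝ} (h : Sol q L f g)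
    (hq : ∀ x, q (-x) = q x) : Sol q L (fun x => f (-x)) (fun x => -g (-x)) := by
  intro x hx
  have hx' : -x ∈ Icc (-L) L := ⟨by linarith [hx.2], by linarith [hx.1]⟩
  have hm : MapsTo (fun x : ℝ => -x) (Icc (-L) L) (Icc (-L) L) := fun y hy =>
    ⟨by linarith [hy.2], by linarith [hy.1]⟩
  have hn : HasDerivWithinAt (fun x : ℝ => -x) (-1) (Icc (-L) L) x :=
    (hasDerivAt_neg x).hasDerivWithinAt
  constructor
  · exact ((h _ hx').1.comp x hn hm).congr_deriv (by ring)
  · exact ((h _ hx').2.comp x hn hm).neg.congr_deriv (by rw [hq]; ring)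

lemma Sol.eq_zero {q : ℝ → ℝ} {L : ℝ} {f g : ℝ → ℝ} (h : Sol q L f g)
    (hq : ContinuousOn q (Icc (-L) L)) {y : ℝ} (hy : y ∈ Icc (-L) L)
    (hf : f y = 0) (hg : g y = 0) {x : ℝ} (hx : x ∈ Icc (-L) L) : f x = 0 ∧ g x = 0 := by
  obtain ⟨B, hB0, hB⟩ := exists_bound hq
  have := energy_growth (K := 1 + B) (E := fun x => f x ^ 2 + g x ^ 2)
    (E' := fun x => 2 * f x * g x + 2 * g x * (q x * f x)) (fun x hx =>
      (((h x hx).1.pow 2).add ((h x hx).2.pow 2)).congr_deriv (by ring)) (fun x hx => by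
      have h1 := abs_le.1 (hB x hx)
      have h2 : |2 * f x * g x + 2 * g x * (q x * f x)| = |1 + q x| * |2 * f x * g x| := by
        rw [← abs_mul]; ring_nf
      rw [h2]
      refine mul_le_mul (abs_le.2 ⟨by linarith, by linarith⟩) (abs_le.2 ⟨?_, ?_⟩)
        (abs_nonneg _) (by linarith)
      · nlinarith [sq_nonneg (f x + g x)]
      · nlinarith [sq_nonneg (f x - g x)]) hx hy
  simp only [hf, hg] at this
  constructor <;> nlinarith [sq_nonneg (f x), sq_nonneg (g x)]

lemma Sol.ext {q : ℝ → ℝ} {L : ℝ} {f g u v : ℝ → ℝ} (h : Sol q L f g) (k : Sol q L u v)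
    (hq : ContinuousOn q (Icc (-L) L)) {y : ℝ} (hy : y ∈ Icc (-L) L)
    (hf : f y = u y) (hg : g y = v y) {x : ℝ} (hx : x ∈ Icc (-L) L) : f x = u x ∧ g x = v x := by
  have := (h.lin k 1 (-1)).eq_zero hq hy (by simp [hf]) (by simp [hg]) hx
  constructor <;> linarith [this.1, this.2]

/-- Truncation of `x` to the interval `[-R, R]`. -/
noncomputable def clip (R x : ℝ) : ℝ := max (-R) (min R x)

lemma clip_abs_le {R : ℝ} (hR : 0 ≤ R) (x : ℝ) : |clip R x| ≤ |x| := by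
  unfold clip; rw [abs_le]
  constructor
  · rcases le_total R x with h | h
    · rw [min_eq_left h]; exact (by linarith [abs_nonneg x] : -|x| ≤ R).trans (le_max_right _ _)
    · rw [min_eq_right h]; exact (neg_abs_le x).trans (le_max_right _ _)
  · refine max_le (by linarith [abs_nonneg x]) ((min_le_right _ _).trans (le_abs_self x))

lemma clip_abs_le' {R : ℝ} (hR : 0 ≤ R) (x : ℝ) : |clip R x| ≤ R :=
  abs_le.2 ⟨le_max_left _ _, max_le (by linarith) (min_le_left _ _)⟩

lemma clip_eq {R x : ℝ} (h : |x| ≤ R) : clip R x = x := by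
  have := abs_le.1 h
  rw [clip, min_eq_right this.2, max_eq_right this.1]

lemma clip_lip (R x y : ℝ) : |clip R x - clip R y| ≤ |x - y| := by
  unfold clip
  have h1 := abs_max_sub_max_le_max (-R) (min R x) (-R) (min R y)
  have h2 := abs_min_sub_min_le_max R x R y
  rw [sub_self, abs_zero, max_eq_right (abs_nonneg (min R x - min R y))] at h1
  rw [sub_self, abs_zero, max_eq_right (abs_nonneg (x - y))] at h2
  exact h1.trans h2

/-- Global existence for the linear initial value problem. The vector field with both components
truncated at height `R` is bounded and Lipschitz, so Picard–Lindelöf applies on all of `[-L, L]`; the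
energy estimate shows that its solution never reaches the truncation. -/
lemma exists_sol {q : ℝ → ℝ} {L : ℝ} (hL : 0 < L) (hq : ContinuousOn q (Icc (-L) L))
    (a b : ℝ) : ∃ f g : ℝ → ℝ, f 0 = a ∧ g 0 = b ∧ Sol q L f g := by
  obtain ⟨B, hB0, hB⟩ := exists_bound hq
  set R : ℝ := (a ^ 2 + b ^ 2) * Real.exp ((1 + B) * L) + 1 with hRdef
  have hR1 : 1 ≤ R := by
    have : 0 ≤ (a ^ 2 + b ^ 2) * Real.exp ((1 + B) * L) := by positivity
    linarith
  have hR : 0 ≤ R := by linarith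
  have h0 : (0 : ℝ) ∈ Icc (-L) L := ⟨by linarith, hL.le⟩
  have hpl : IsPicardLindelof (fun t (p : ℝ × ℝ) => (clip R p.2, q t * clip R p.1))
      (⟨0, h0⟩ : Icc (-L) L) (a, b) (((1 + B) * R * L).toNNReal) 0 (((1 + B) * R).toNNReal)
      ((1 + B).toNNReal) := by
    refine ⟨fun t ht => ?_, fun p _ => ?_, fun t ht p _ => ?_, ?_⟩
    · refine LipschitzOnWith.of_dist_le_mul fun x _ y _ => ?_
      rw [Real.coe_toNNReal _ (by linarith), dist_eq_norm, dist_eq_norm, Prod.norm_def]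
      have h1 : |x.1 - y.1| ≤ ‖x - y‖ := norm_fst_le (x - y)
      have h2 : |x.2 - y.2| ≤ ‖x - y‖ := norm_snd_le (x - y)
      refine max_le ?_ ?_
      · simp only [Prod.fst_sub, Real.norm_eq_abs]
        have := clip_lip R x.2 y.2
        nlinarith [norm_nonneg (x - y)]
      · simp only [Prod.snd_sub, Real.norm_eq_abs]
        rw [← mul_sub, abs_mul]
        have := clip_lip R x.1 y.1
        have h3 := mul_le_mul (hB t ht) (this.trans h1) (abs_nonneg _) hB0
        nlinarith [norm_nonneg (x - y)]
    · exact continuousOn_const.prodMk (hq.mul continuousOn_const)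
    · rw [Real.coe_toNNReal _ (by positivity), Prod.norm_def]
      refine max_le ?_ ?_
      · simp only [Real.norm_eq_abs]
        have := clip_abs_le' hR p.2
        nlinarith
      · simp only [Real.norm_eq_abs]
        rw [abs_mul]
        have h3 := mul_le_mul (hB t ht) (clip_abs_le' hR p.1) (abs_nonneg _) hB0
        nlinarith
    · rw [Real.coe_toNNReal _ (by positivity), Real.coe_toNNReal _ (by positivity)]
      simp
  obtain ⟨α, hα0, hα⟩ := hpl.exists_eq_forall_mem_Icc_hasDerivWithinAt₀
  have hα0' : α 0 = (a, b) := hα0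
  have d1 : ∀ x ∈ Icc (-L) L,
      HasDerivWithinAt (fun t => (α t).1) (clip R (α x).2) (Icc (-L) L) x :=
    fun x hx => (hasFDerivAt_fst.comp_hasDerivWithinAt x (hα x hx) :)
  have d2 : ∀ x ∈ Icc (-L) L,
      HasDerivWithinAt (fun t => (α t).2) (q x * clip R (α x).1) (Icc (-L) L) x :=
    fun x hx => (hasFDerivAt_snd.comp_hasDerivWithinAt x (hα x hx) :)
  have hen : ∀ x ∈ Icc (-L) L, (α x).1 ^ 2 + (α x).2 ^ 2 ≤ R := by
    intro x hx
    have := energy_growth (K := 1 + B) (E := fun x => (α x).1 ^ 2 + (α x).2 ^ 2)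
      (E' := fun x => 2 * (α x).1 * clip R (α x).2 + 2 * (α x).2 * (q x * clip R (α x).1))
      (fun x hx => (((d1 x hx).pow 2).add ((d2 x hx).pow 2)).congr_deriv (by ring))
      (fun x hx => by
        have h1 := clip_abs_le hR (α x).1
        have h2 := clip_abs_le hR (α x).2
        have h3 := hB x hx
        have h4 : |(α x).1 * clip R (α x).2| ≤ |(α x).1| * |(α x).2| := by
          rw [abs_mul]; gcongr
        have h5 : |(α x).2 * (q x * clip R (α x).1)| ≤ |(α x).2| * (B * |(α x).1|) := by
          rw [abs_mul, abs_mul]; gcongr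
        have h6 := abs_add_le (2 * ((α x).1 * clip R (α x).2))
          (2 * ((α x).2 * (q x * clip R (α x).1)))
        rw [abs_mul 2, abs_mul 2, abs_two] at h6
        have h7 : 2 * (|(α x).1| * |(α x).2|) ≤ (α x).1 ^ 2 + (α x).2 ^ 2 := by
          rw [← sq_abs (α x).1, ← sq_abs (α x).2]
          nlinarith [sq_nonneg (|(α x).1| - |(α x).2|)]
        have h8 := mul_le_mul_of_nonneg_left h7 (by linarith : 0 ≤ 1 + B)
        calc _ = |2 * ((α x).1 * clip R (α x).2) + 2 * ((α x).2 * (q x * clip R (α x).1))| := by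
              ring_nf
          _ ≤ _ := by linarith) hx h0
    simp only [hα0', sub_zero] at this
    have hxL : |x| ≤ L := abs_le.2 hx
    have h9 : (a ^ 2 + b ^ 2) * Real.exp ((1 + B) * |x|)
        ≤ (a ^ 2 + b ^ 2) * Real.exp ((1 + B) * L) := by gcongr
    linarith
  have hb : ∀ x ∈ Icc (-L) L, |(α x).1| ≤ R ∧ |(α x).2| ≤ R := by
    intro x hx
    have := hen x hx
    constructor <;> refine abs_le_of_sq_le_sq ?_ hR <;>
      nlinarith [sq_nonneg (α x).1, sq_nonneg (α x).2]
  refine ⟨fun t => (α t).1, fun t => (α t).2, by simp [hα0'], by simp [hα0'], fun x hx => ⟨?_, ?_⟩⟩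
  · have := d1 x hx; rwa [clip_eq (hb x hx).2] at this
  · have := d2 x hx; rwa [clip_eq (hb x hx).1] at this

lemma exists_even {q : ℝ → ℝ} {L : ℝ} (hL : 0 < L) (hq : Continuous q) (he : ∀ x, q (-x) = q x) :
    ∃ f g : ℝ → ℝ, f 0 = 1 ∧ g 0 = 0 ∧ Sol q L f g ∧ f (-L) = f L ∧ g (-L) = -g L := by
  obtain ⟨f, g, hf, hg, h⟩ := exists_sol hL hq.continuousOn 1 0
  refine ⟨_, _, ?_, ?_, h.lin (h.reflect he) (1 / 2) (1 / 2), ?_, ?_⟩ <;> simp [hf, hg] <;> ring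

lemma exists_odd {q : ℝ → ℝ} {L : ℝ} (hL : 0 < L) (hq : Continuous q) (he : ∀ x, q (-x) = q x) :
    ∃ f g : ℝ → ℝ, f 0 = 0 ∧ g 0 = 1 ∧ Sol q L f g ∧ f (-L) = -f L ∧ g (-L) = g L := by
  obtain ⟨f, g, hf, hg, h⟩ := exists_sol hL hq.continuousOn 0 1
  refine ⟨_, _, ?_, ?_, h.lin (h.reflect he) (1 / 2) (-1 / 2), ?_, ?_⟩ <;> simp [hf, hg] <;> ring

/-! ### Sturm comparison -/

lemma Sol.hasDerivAt {q : ℝ → ℝ} {L : ℝ} {f g : ℝ → ℝ} (h : Sol q L f g) {x : ℝ}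
    (hx : x ∈ Ioo (-L) L) : HasDerivAt f (g x) x ∧ HasDerivAt g (q x * f x) x :=
  ⟨(h x (Ioo_subset_Icc_self hx)).1.hasDerivAt (Icc_mem_nhds hx.1 hx.2),
   (h x (Ioo_subset_Icc_self hx)).2.hasDerivAt (Icc_mem_nhds hx.1 hx.2)⟩

/-- The Wronskian `f h' - f' h` has derivative `(p - q) f h`, hence decreases strictly while `f > 0`. -/
lemma wronskian_neg {L : ℝ} (hL : 0 < L) {p q h h' f f' : ℝ → ℝ} (Hh : Sol p L h h')
    (Hf : Sol q L f f') (hp : ∀ x ∈ Ioo 0 L, 0 < h x) (hpq : ∀ x ∈ Ioo 0 L, p x < q x)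
    (h0 : f 0 * h' 0 - f' 0 * h 0 = 0) {c : ℝ} (hc : c ∈ Ioc 0 L)
    (hfc : ∀ x ∈ Ioo 0 c, 0 < f x) : f c * h' c - f' c * h c < 0 := by
  have hsub : Icc 0 c ⊆ Icc (-L) L := Icc_subset_Icc (by linarith) hc.2
  have hd : ∀ x ∈ Icc 0 c, HasDerivWithinAt (fun x => f x * h' x - f' x * h x)
      ((p x - q x) * (f x * h x)) (Icc 0 c) x := fun x hx => by
    have a := Hh x (hsub hx)
    have b := Hf x (hsub hx)
    exact (((b.1.mul a.2).sub (b.2.mul a.1)).mono hsub).congr_deriv (by ring)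
  have := strictAntiOn_of_hasDerivWithinAt_neg (convex_Icc 0 c)
    (fun x hx => (hd x hx).continuousWithinAt)
    (fun x hx => (hd x (interior_subset hx)).mono interior_subset) (fun x hx => by
      rw [interior_Icc] at hx
      have hx' : x ∈ Ioo 0 L := ⟨hx.1, hx.2.trans_le hc.2⟩
      have := mul_pos (hfc x hx) (hp x hx')
      nlinarith [hpq x hx']) (left_mem_Icc.2 hc.1.le) (right_mem_Icc.2 hc.1.le) hc.1
  simpa only [h0] using this

/-- Sturm comparison on `[0, L]`. At a first zero `c` of `f` one would have `f' c ≤ 0`, while the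
Wronskian inequality forces `f' c * h c > 0`; so `f` has no zero, and the inequality holds up to `L`. -/
lemma compare {L : ℝ} (hL : 0 < L) {p q h h' f f' : ℝ → ℝ} (Hh : Sol p L h h')
    (Hf : Sol q L f f') (hp : ∀ x ∈ Ioo 0 L, 0 < h x) (hpq : ∀ x ∈ Ioo 0 L, p x < q x)
    (h0 : f 0 * h' 0 - f' 0 * h 0 = 0) (hi : 0 < f 0 ∨ (f 0 = 0 ∧ 0 < f' 0)) :
    (∀ x ∈ Ioc 0 L, 0 < f x) ∧ f L * h' L < f' L * h L := by
  have hev : ∀ᶠ x in 𝓝[>] (0 : ℝ), 0 < f x := by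
    have hd := (Hf.hasDerivAt (x := 0) ⟨by linarith, hL⟩).1
    rcases hi with hi | ⟨hi, hi'⟩
    · exact (hd.continuousAt.eventually (lt_mem_nhds hi)).filter_mono nhdsWithin_le_nhds
    · have h1 := (hasDerivWithinAt_iff_tendsto_slope.1 (hd.hasDerivWithinAt (s := Ioi 0)))
      rw [sdiff_singleton_eq_self (by simp)] at h1
      filter_upwards [h1.eventually (lt_mem_nhds hi'), self_mem_nhdsWithin] with x hx hx0
      rw [slope_def_field, hi, sub_zero, sub_zero] at hx
      exact (div_pos_iff_of_pos_right hx0).1 hx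
  have hpos : ∀ x ∈ Ioc 0 L, 0 < f x := by
    by_contra! hcon
    obtain ⟨x, hx, hfx⟩ := hcon
    obtain ⟨ε, hε, hεf⟩ := mem_nhdsGT_iff_exists_Ioo_subset.1 hev
    have hε : 0 < ε := hε
    have hεx : ε ≤ x := by
      by_contra! hlt
      exact absurd (hεf ⟨hx.1, hlt⟩) (not_lt.2 hfx)
    have hsub : Icc (ε / 2) L ⊆ Icc (-L) L := Icc_subset_Icc (by linarith) le_rfl
    have hcl : IsCompact (Icc (ε / 2) L ∩ f ⁻¹' Iic 0) :=
      isCompact_Icc.of_isClosed_subset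
        ((Hf.continuousOn.mono hsub).preimage_isClosed_of_isClosed isClosed_Icc isClosed_Iic)
        inter_subset_left
    obtain ⟨c, ⟨hcI, hc0⟩, hcl⟩ := hcl.exists_isLeast ⟨x, ⟨by linarith, hx.2⟩, hfx⟩
    have hc0 : f c ≤ 0 := hc0
    have hcpos : 0 < c := by linarith [hcI.1]
    have hfc : ∀ y ∈ Ioo 0 c, 0 < f y := by
      intro y hy
      by_cases hyε : y < ε
      · exact hεf ⟨hy.1, hyε⟩
      · by_contra! hfy
        have := hcl ⟨⟨by linarith, hy.2.le.trans hcI.2⟩, hfy⟩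
        linarith [hy.2]
    have hne : (𝓝[Ioo 0 c] c).NeBot := by
      rw [← mem_closure_iff_nhdsWithin_neBot, closure_Ioo hcpos.ne]
      exact ⟨hcpos.le, le_rfl⟩
    have hsub2 : Ioo 0 c ⊆ Icc (-L) L := fun y hy => ⟨by linarith [hy.1], by linarith [hy.2, hcI.2]⟩
    have hd := (Hf c (hsub hcI)).1.mono hsub2
    have hfc0 : f c = 0 := le_antisymm hc0 (ge_of_tendsto hd.continuousWithinAt
      (by filter_upwards [self_mem_nhdsWithin] with y hy using (hfc y hy).le))
    have hderiv : f' c ≤ 0 := by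
      have h1 := hasDerivWithinAt_iff_tendsto_slope.1 hd
      rw [sdiff_singleton_eq_self (by simp)] at h1
      refine le_of_tendsto h1 ?_
      filter_upwards [self_mem_nhdsWithin] with y hy
      rw [slope_def_field, hfc0, sub_zero]
      exact div_nonpos_of_nonneg_of_nonpos (hfc y hy).le (by linarith [hy.2])
    have hh : 0 ≤ h c := ge_of_tendsto ((Hh c (hsub hcI)).1.mono hsub2).continuousWithinAt
      (by filter_upwards [self_mem_nhdsWithin] with y hy using
        (hp y ⟨hy.1, hy.2.trans_le hcI.2⟩).le)
    have := wronskian_neg hL Hh Hf hp hpq h0 ⟨hcpos, hcI.2⟩ hfc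
    rw [hfc0] at this
    nlinarith
  refine ⟨hpos, ?_⟩
  have := wronskian_neg hL Hh Hf hp hpq h0 ⟨hL, le_rfl⟩ fun x hx => hpos x ⟨hx.1, hx.2.le⟩
  linarith

/-- Comparison with `cosh` for even data and `sinh` for odd data. The hypothesis `hc` says that
`cosh` satisfies the Robin condition; for `sinh` the inequality also uses `L > 1`. -/
lemma robin_neg_of_one_lt {L : ℝ} (hL : 0 < L) (hc : L * Real.sinh L = Real.cosh L)
    {q f g : ℝ → ℝ} (Hf : Sol q L f g) (hq : ∀ x ∈ Ioo 0 L, 1 < q x)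
    (hi : (f 0 = 1 ∧ g 0 = 0) ∨ (f 0 = 0 ∧ g 0 = 1)) : f L - L * g L < 0 := by
  have hch := Real.cosh_pos L
  have hsh : 0 < Real.sinh L := Real.sinh_pos_iff.2 hL
  rcases hi with ⟨h0, h1⟩ | ⟨h0, h1⟩
  · have := (compare hL (p := fun _ => 1) (h := Real.cosh) (h' := Real.sinh)
      (fun x _ => ⟨(Real.hasDerivAt_cosh x).hasDerivWithinAt,
        (Real.hasDerivAt_sinh x).hasDerivWithinAt.congr_deriv (by ring)⟩) Hf
      (fun x _ => Real.cosh_pos x) hq (by simp [h1]) (by simp [h0])).2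
    rw [← hc] at this
    nlinarith
  · obtain ⟨hpos, this⟩ := compare hL (p := fun _ => 1) (h := Real.sinh) (h' := Real.cosh)
      (fun x _ => ⟨(Real.hasDerivAt_sinh x).hasDerivWithinAt,
        (Real.hasDerivAt_cosh x).hasDerivWithinAt.congr_deriv (by ring)⟩) Hf
      (fun x hx => Real.sinh_pos_iff.2 hx.1) hq (by simp [h0]) (by simp [h0, h1])
    have hfL := hpos L ⟨hL, le_rfl⟩
    rw [← hc] at this
    have hlt : f L * L < g L := by
      have : f L * L * Real.sinh L < g L * Real.sinh L := by linarith
      exact lt_of_mul_lt_mul_right this hsh.le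
    have hL1 : 1 < L := by
      by_contra! hle
      nlinarith [Real.sinh_lt_cosh L]
    have h3 : f L < f L * L := lt_mul_of_one_lt_right hfL hL1
    have h4 : g L < L * g L := lt_mul_of_one_lt_left (by linarith) hL1
    linarith

/-! ### The Jacobi potential -/

/-- The potential `M + lam cosh² x - 2 / cosh² x`; for Fourier mode `m` one takes `M = m²`. -/
noncomputable def pot (M lam x : ℝ) : ℝ := M + lam * Real.cosh x ^ 2 - 2 / Real.cosh x ^ 2

lemma pot_continuous (M lam : ℝ) : Continuous (pot M lam) := by
  unfold pot
  have : ∀ x : ℝ, Real.cosh x ^ 2 ≠ 0 := fun x => (pow_pos (Real.cosh_pos x) 2).ne'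
  exact ((continuous_const.add (continuous_const.mul (Real.continuous_cosh.pow 2))).sub
    (continuous_const.div (Real.continuous_cosh.pow 2) this))

lemma pot_even (M lam x : ℝ) : pot M lam (-x) = pot M lam x := by simp [pot]

lemma one_lt_pot {M lam x : ℝ} (hx : 0 < x) (hlam : 0 ≤ lam) (hM : 3 ≤ M + lam) :
    1 < pot M lam x := by
  have h1 : 1 < Real.cosh x := Real.one_lt_cosh.2 hx.ne'
  have h2 : 1 < Real.cosh x ^ 2 := by nlinarith
  have h3 : 2 / Real.cosh x ^ 2 < 2 := by rw [div_lt_iff₀ (by linarith)]; linarith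
  unfold pot
  nlinarith

lemma pot_lt_pot (M : ℝ) {a b : ℝ} (hab : a < b) (x : ℝ) : pot M a x < pot M b x := by
  have := pow_pos (Real.cosh_pos x) 2
  unfold pot
  nlinarith

/-- For `δ = lam - μ`, `d = U lam - U μ` and `e = V lam - V μ`, the energy `d² + e² + δ²` starts at
`δ²` and grows at most exponentially, at a rate uniform in `|δ| ≤ 1`. -/
lemma robin_continuous {L : ℝ} (hL : 0 < L) (M : ℝ) {a b : ℝ} {U V : ℝ → ℝ → ℝ}
    (hS : ∀ lam, Sol (pot M lam) L (U lam) (V lam)) (hU : ∀ lam, U lam 0 = a)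
    (hV : ∀ lam, V lam 0 = b) : Continuous fun lam => U lam L - L * V lam L := by
  rw [continuous_iff_continuousAt]
  intro μ
  obtain ⟨B, hB0, hB⟩ := exists_bound (hS μ).continuousOn
  obtain ⟨P, hP0, hP⟩ := exists_bound (L := L) (pot_continuous M μ).continuousOn
  obtain ⟨Q, hQ0, hQ⟩ := exists_bound (L := L) (Real.continuous_cosh.pow 2).continuousOn
  set K : ℝ := 1 + P + Q + Q * B with hK
  have hK0 : 0 ≤ K := by positivity
  have key : ∀ lam, |lam - μ| ≤ 1 →
      |(U lam L - L * V lam L) - (U μ L - L * V μ L)| ≤ (1 + L) * Real.exp (K * L) * |lam - μ| := by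
    intro lam hlam
    have hLmem : L ∈ Icc (-L) L := ⟨by linarith, le_rfl⟩
    have := energy_growth (K := K) (L := L)
      (E := fun x => (U lam x - U μ x) ^ 2 + (V lam x - V μ x) ^ 2 + (lam - μ) ^ 2)
      (E' := fun x => 2 * (U lam x - U μ x) * (V lam x - V μ x) +
        2 * (V lam x - V μ x) * (pot M lam x * U lam x - pot M μ x * U μ x))
      (fun x hx => (((((hS lam x hx).1.sub (hS μ x hx).1).pow 2).add
        (((hS lam x hx).2.sub (hS μ x hx).2).pow 2)).add_const _).congr_deriv
          (by simp only [Pi.sub_apply]; ring))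
      (fun x hx => by
        have hpot : pot M lam x = pot M μ x + (lam - μ) * Real.cosh x ^ 2 := by
          unfold pot; ring
        have hq : |pot M lam x| ≤ P + Q := by
          rw [hpot]
          refine (abs_add_le _ _).trans (add_le_add (hP x hx) ?_)
          rw [abs_mul]
          calc _ ≤ 1 * Q := mul_le_mul hlam (hQ x hx) (abs_nonneg _) zero_le_one
            _ = Q := one_mul _
        have hcb : |Real.cosh x ^ 2 * U μ x| ≤ Q * B := by
          rw [abs_mul]
          exact mul_le_mul (hQ x hx) (hB x hx) (abs_nonneg _) hQ0
        have e : 2 * (U lam x - U μ x) * (V lam x - V μ x) +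
            2 * (V lam x - V μ x) * (pot M lam x * U lam x - pot M μ x * U μ x) =
            (1 + pot M lam x) * (2 * (U lam x - U μ x) * (V lam x - V μ x)) +
            (Real.cosh x ^ 2 * U μ x) * (2 * (lam - μ) * (V lam x - V μ x)) := by
          rw [hpot]; ring
        rw [e]
        generalize U lam x - U μ x = d
        generalize V lam x - V μ x = w
        generalize lam - μ = δ
        have i1 : |2 * d * w| ≤ d ^ 2 + w ^ 2 := abs_le.2
          ⟨by nlinarith [sq_nonneg (d + w)], by nlinarith [sq_nonneg (d - w)]⟩
        have i2 : |2 * δ * w| ≤ δ ^ 2 + w ^ 2 := abs_le.2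
          ⟨by nlinarith [sq_nonneg (δ + w)], by nlinarith [sq_nonneg (δ - w)]⟩
        have i3 : |1 + pot M lam x| ≤ 1 + (P + Q) :=
          (abs_add_le _ _).trans (by rw [abs_one]; linarith)
        have i4 := mul_le_mul i3 i1 (abs_nonneg _) (by linarith)
        have i5 := mul_le_mul hcb i2 (abs_nonneg _) (by positivity)
        refine (abs_add_le _ _).trans ?_
        rw [abs_mul (1 + pot M lam x), abs_mul (Real.cosh x ^ 2 * U μ x)]
        have i6 : 0 ≤ (1 + (P + Q)) * δ ^ 2 := by positivity
        have i7 : 0 ≤ Q * B * d ^ 2 := by positivity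
        rw [hK]
        nlinarith)
      hLmem (y := 0) ⟨by linarith, hL.le⟩
    simp only [hU, hV, sub_self, sub_zero, abs_of_pos hL] at this
    have e1 : 1 ≤ Real.exp (K * L) := Real.one_le_exp (by positivity)
    have e2 : (lam - μ) ^ 2 * Real.exp (K * L) ≤ (Real.exp (K * L) * |lam - μ|) ^ 2 := by
      rw [mul_pow, sq_abs]
      nlinarith [mul_nonneg (sq_nonneg (lam - μ)) (by nlinarith : (0 : ℝ) ≤
        Real.exp (K * L) ^ 2 - Real.exp (K * L))]
    have e0 : 0 ≤ Real.exp (K * L) * |lam - μ| := by positivity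
    have a1 : |U lam L - U μ L| ≤ Real.exp (K * L) * |lam - μ| :=
      abs_le_of_sq_le_sq (by nlinarith [sq_nonneg (V lam L - V μ L), sq_nonneg (lam - μ)]) e0
    have a2 : |V lam L - V μ L| ≤ Real.exp (K * L) * |lam - μ| :=
      abs_le_of_sq_le_sq (by nlinarith [sq_nonneg (U lam L - U μ L), sq_nonneg (lam - μ)]) e0
    calc _ = |(U lam L - U μ L) - L * (V lam L - V μ L)| := by ring_nf
      _ ≤ |U lam L - U μ L| + |L * (V lam L - V μ L)| := abs_sub _ _
      _ = |U lam L - U μ L| + L * |V lam L - V μ L| := by rw [abs_mul, abs_of_pos hL]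
      _ ≤ _ := by nlinarith
  rw [ContinuousAt, tendsto_iff_norm_sub_tendsto_zero]
  have hlim : Tendsto (fun lam => (1 + L) * Real.exp (K * L) * |lam - μ|) (𝓝 μ) (𝓝 0) := by
    have : Continuous fun lam => (1 + L) * Real.exp (K * L) * |lam - μ| := by fun_prop
    simpa using this.tendsto μ
  refine squeeze_zero' (Eventually.of_forall fun _ => norm_nonneg _) ?_ hlim
  filter_upwards [Metric.closedBall_mem_nhds μ one_pos] with lam hlam
  exact key lam hlam

/-- Existence and uniqueness of a positive zero of the Robin function of one parity, given a positive
reference solution `h` at parameter `0`. Two zeros `s < t` are impossible: `U s` is positive by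
comparison with `h`, and comparing `U t` with `U s` contradicts both being Robin. -/
lemma exists_unique_zero {L : ℝ} (hL : 0 < L) {M Λ : ℝ} (hΛ : 0 < Λ) {a b : ℝ} {U V : ℝ → ℝ → ℝ}
    (hS : ∀ lam, Sol (pot M lam) L (U lam) (V lam)) (hU : ∀ lam, U lam 0 = a)
    (hV : ∀ lam, V lam 0 = b) (hab : 0 < a ∨ (a = 0 ∧ 0 < b)) {h h' : ℝ → ℝ}
    (Hh : Sol (pot M 0) L h h') (hh : h 0 = a) (hh' : h' 0 = b) (hpos : ∀ x ∈ Ioo 0 L, 0 < h x)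
    (hrob : 0 < h L - L * h' L) (hneg : U Λ L - L * V Λ L < 0) :
    ∃ lam0 ∈ Ioo 0 Λ, U lam0 L - L * V lam0 L = 0 ∧
      ∀ lam, 0 < lam → U lam L - L * V lam L = 0 → lam = lam0 := by
  have hLmem : L ∈ Icc (-L) L := ⟨by linarith, le_rfl⟩
  have h0mem : (0 : ℝ) ∈ Icc (-L) L := ⟨by linarith, hL.le⟩
  have hzero : 0 < U 0 L - L * V 0 L := by
    obtain ⟨e1, e2⟩ := (hS 0).ext Hh (pot_continuous M 0).continuousOn h0mem
      (by rw [hU, hh]) (by rw [hV, hh']) hLmem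
    rwa [e1, e2]
  have hno : ∀ s t, 0 < s → s < t → U s L - L * V s L = 0 → U t L - L * V t L = 0 → False := by
    intro s t hs hst h1 h2
    have hp := (compare hL Hh (hS s) hpos (fun x _ => pot_lt_pot M hs x)
      (by rw [hU, hV, hh, hh']; ring) (by rwa [hU, hV])).1
    have := (compare hL (hS s) (hS t) (fun x hx => hp x ⟨hx.1, hx.2.le⟩)
      (fun x _ => pot_lt_pot M hst x) (by simp only [hU, hV]; ring) (by rwa [hU, hV])).2
    rw [sub_eq_zero] at h1 h2
    rw [h1, h2] at this
    linarith
  obtain ⟨lam0, ⟨h1, h2⟩, h3⟩ := intermediate_value_Ioo' hΛ.le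
    (robin_continuous hL M hS hU hV).continuousOn ⟨hneg, hzero⟩
  refine ⟨lam0, ⟨h1, h2⟩, h3, fun lam hlam h => ?_⟩
  rcases lt_trichotomy lam lam0 with hlt | heq | hlt
  · exact (hno _ _ hlam hlt h h3).elim
  · exact heq
  · exact (hno _ _ h1 hlt h3 h).elim

/-! ### Explicit solutions at parameter zero -/

lemma hasDerivAt_sinh_div_cosh (x : ℝ) :
    HasDerivAt (fun x => Real.sinh x / Real.cosh x) (1 / Real.cosh x ^ 2) x := by
  refine ((Real.hasDerivAt_sinh x).div (Real.hasDerivAt_cosh x) (Real.cosh_pos x).ne').congr_deriv ?_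
  rw [← sq, ← sq, Real.cosh_sq_sub_sinh_sq]

lemma hasDerivAt_inv_cosh (x : ℝ) :
    HasDerivAt (fun x => 1 / Real.cosh x) (-Real.sinh x / Real.cosh x ^ 2) x := by
  refine ((hasDerivAt_const x (1 : ℝ)).div (Real.hasDerivAt_cosh x)
    (Real.cosh_pos x).ne').congr_deriv ?_
  ring

lemma hasDerivAt_inv_cosh_sq (x : ℝ) :
    HasDerivAt (fun x => 1 / Real.cosh x ^ 2) (-2 * Real.sinh x / Real.cosh x ^ 3) x := by
  refine ((hasDerivAt_const x (1 : ℝ)).div ((Real.hasDerivAt_cosh x).pow 2)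
    (pow_pos (Real.cosh_pos x) 2).ne').congr_deriv ?_
  have := (Real.cosh_pos x).ne'
  simp only [Pi.pow_apply]
  field_simp
  ring

lemma sol_zero_even (L : ℝ) : Sol (pot 0 0) L (fun x => 1 - x * (Real.sinh x / Real.cosh x))
    (fun x => -(Real.sinh x / Real.cosh x + x * (1 / Real.cosh x ^ 2))) := by
  intro x _
  have h0 := (Real.cosh_pos x).ne'
  constructor
  · refine (((hasDerivAt_id x).mul (hasDerivAt_sinh_div_cosh x)).const_sub
      1).hasDerivWithinAt.congr_deriv ?_
    simp
  · refine ((hasDerivAt_sinh_div_cosh x).add ((hasDerivAt_id x).mul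
      (hasDerivAt_inv_cosh_sq x))).neg.hasDerivWithinAt.congr_deriv ?_
    simp only [pot, id]
    field_simp
    ring

lemma sol_zero_odd (L : ℝ) : Sol (pot 0 0) L (fun x => Real.sinh x / Real.cosh x)
    (fun x => 1 / Real.cosh x ^ 2) := by
  intro x _
  have h0 := (Real.cosh_pos x).ne'
  refine ⟨(hasDerivAt_sinh_div_cosh x).hasDerivWithinAt,
    (hasDerivAt_inv_cosh_sq x).hasDerivWithinAt.congr_deriv ?_⟩
  simp only [pot]
  field_simp
  ring

lemma hasDerivAt_sinh_div_cosh_sq (x : ℝ) :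
    HasDerivAt (fun x => -Real.sinh x / Real.cosh x ^ 2) (pot 1 0 x * (1 / Real.cosh x)) x := by
  have h0 := (Real.cosh_pos x).ne'
  refine ((Real.hasDerivAt_sinh x).neg.div ((Real.hasDerivAt_cosh x).pow 2)
    (pow_pos (Real.cosh_pos x) 2).ne').congr_deriv ?_
  simp only [pot, Pi.neg_apply, Pi.pow_apply]
  have := Real.cosh_sq_sub_sinh_sq x
  field_simp
  have e : Real.sinh x ^ 2 = Real.cosh x ^ 2 - 1 := by linarith
  push_cast
  ring_nf
  rw [e]
  ring

lemma sol_one_even (L : ℝ) : Sol (pot 1 0) L (fun x => 1 / Real.cosh x)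
    (fun x => -Real.sinh x / Real.cosh x ^ 2) := fun x _ =>
  ⟨(hasDerivAt_inv_cosh x).hasDerivWithinAt, (hasDerivAt_sinh_div_cosh_sq x).hasDerivWithinAt⟩

lemma sol_one_odd (L : ℝ) : Sol (pot 1 0) L (fun x => Real.sinh x + x * (1 / Real.cosh x))
    (fun x => Real.cosh x + (1 / Real.cosh x + x * (-Real.sinh x / Real.cosh x ^ 2))) := by
  intro x _
  have h0 := (Real.cosh_pos x).ne'
  constructor
  · refine ((Real.hasDerivAt_sinh x).add ((hasDerivAt_id x).mul
      (hasDerivAt_inv_cosh x))).hasDerivWithinAt.congr_deriv ?_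
    simp
  · refine ((Real.hasDerivAt_cosh x).add ((hasDerivAt_inv_cosh x).add ((hasDerivAt_id x).mul
      (hasDerivAt_sinh_div_cosh_sq x)))).hasDerivWithinAt.congr_deriv ?_
    simp only [pot, id]
    field_simp
    ring

/-- For `m² = 1` the odd solution `sinh x + x / cosh x` at parameter `0` satisfies the Robin
condition exactly, so for `lam > 0` comparison makes the odd Robin function negative. -/
lemma robin_neg_one_odd {L : ℝ} (hL : 0 < L) (hc : L * Real.sinh L = Real.cosh L) {lam : ℝ}
    (hlam : 0 < lam) {f g : ℝ → ℝ} (Hf : Sol (pot 1 lam) L f g) (h0 : f 0 = 0) (h1 : g 0 = 1) :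
    f L - L * g L < 0 := by
  have hch := Real.cosh_pos L
  have := (compare hL (sol_one_odd L) Hf
    (fun x hx => add_pos (Real.sinh_pos_iff.2 hx.1)
      (mul_pos hx.1 (div_pos one_pos (Real.cosh_pos x))))
    (fun x _ => pot_lt_pot 1 hlam x) (by simp [h0]) (by simp [h0, h1])).2
  have e1 : Real.cosh L + (1 / Real.cosh L + L * (-Real.sinh L / Real.cosh L ^ 2)) =
      Real.cosh L := by
    have : L * (-Real.sinh L / Real.cosh L ^ 2) = -(L * Real.sinh L) / Real.cosh L ^ 2 := by ring
    rw [this, hc]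
    field_simp
    ring
  have e2 : Real.sinh L + L * (1 / Real.cosh L) = L * Real.cosh L := by
    have := Real.cosh_sq_sub_sinh_sq L
    field_simp
    linear_combination Real.sinh L * (-hc) - L * this
  rw [e1, e2] at this
  nlinarith

/-- Two Robin solutions have proportional data at `L`, so an even and an odd one cannot coexist. -/
lemma not_both {L : ℝ} (hL : 0 < L) {q u u' w w' : ℝ → ℝ} (hq : Continuous q)
    (Hu : Sol q L u u') (Hw : Sol q L w w') (hu : u 0 = 1) (hu' : u' 0 = 0) (hw : w 0 = 0)
    (hw' : w' 0 = 1) (h1 : u L - L * u' L = 0) (h2 : w L - L * w' L = 0) : False := by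
  have hLmem : L ∈ Icc (-L) L := ⟨by linarith, le_rfl⟩
  have h0mem : (0 : ℝ) ∈ Icc (-L) L := ⟨by linarith, hL.le⟩
  have hz := (Hu.lin Hw (w' L) (-u' L)).eq_zero hq.continuousOn hLmem
    (by rw [sub_eq_zero.1 h1, sub_eq_zero.1 h2]; ring) (by ring) h0mem
  simp only [hu, hu', hw, hw'] at hz
  have hu0 : u' L = 0 := by linarith [hz.2]
  have := (Hu.eq_zero hq.continuousOn hLmem (by rw [sub_eq_zero.1 h1, hu0, mul_zero]) hu0 h0mem).1
  rw [hu] at this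
  exact one_ne_zero this

/-! ### The spectrum -/

/-- The set `S` of pairs `(m, λ)` with `λ > 0` admitting a nontrivial solution of the
Robin boundary value problem consists of exactly `(0, λ₀)`, `(0, λ₁)`, `(1, λ₂)`, `(-1, λ₂)`
with `λ₀ ≠ λ₁` in `(0,3)` and `λ₂ ∈ (0,2)`, and each of these problems has a one-dimensional
space of solutions; consequently the Morse index of the critical catenoid is `4`. -/
theorem morse_index_critical_catenoid
    (L : ℝ) (hL : 0 < L) (hL1 : L * Real.tanh L = 1)
    (S : Set (ℤ × ℝ))
    (hS : S = {p : ℤ × ℝ | 0 < p.2 ∧ ∃ f f' : ℝ → ℝ, SolBVP L p.1 p.2 f f' ∧ Nontriv L f}) :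
    ∃ lam0 lam1 lam2 : ℝ,
      lam0 ∈ Set.Ioo (0 : ℝ) 3 ∧ lam1 ∈ Set.Ioo (0 : ℝ) 3 ∧ lam0 ≠ lam1 ∧
      lam2 ∈ Set.Ioo (0 : ℝ) 2 ∧
      S = {((0 : ℤ), lam0), ((0 : ℤ), lam1), ((1 : ℤ), lam2), ((-1 : ℤ), lam2)} ∧
      ∀ p ∈ S, ∃ f₀ f₀' : ℝ → ℝ, SolBVP L p.1 p.2 f₀ f₀' ∧ Nontriv L f₀ ∧
        ∀ f f' : ℝ → ℝ, SolBVP L p.1 p.2 f f' →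
          ∃ c : ℝ, ∀ x ∈ Set.Icc (-L) L, f x = c * f₀ x := by
  have hch := Real.cosh_pos L
  have hsh : 0 < Real.sinh L := Real.sinh_pos_iff.2 hL
  have hc : L * Real.sinh L = Real.cosh L := by
    rw [Real.tanh_eq_sinh_div_cosh, mul_div_assoc', div_eq_one_iff_eq hch.ne'] at hL1
    exact hL1
  have hLmem : L ∈ Icc (-L) L := ⟨by linarith, le_rfl⟩
  have h0mem : (0 : ℝ) ∈ Icc (-L) L := ⟨by linarith, hL.le⟩
  have hE := fun M lam => exists_even hL (pot_continuous M lam) (pot_even M lam)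
  have hO := fun M lam => exists_odd hL (pot_continuous M lam) (pot_even M lam)
  choose U U' hU0 hU0' hUS hUe hUe' using hE
  choose W W' hW0 hW0' hWS hWe hWe' using hO
  -- `e0`, `o0` are the zeros of the even and odd Robin functions for `m = 0`, and `e1` the zero of
  -- the even one for `|m| = 1`.
  obtain ⟨e0, he0, hFe0, hue0⟩ := exists_unique_zero hL (M := 0) (Λ := 3) (by norm_num)
    (hUS 0) (hU0 0) (hU0' 0) (Or.inl one_pos) (sol_zero_even L) (by simp) (by simp)
    (fun x hx => by
      have h1 : Real.sinh x / Real.cosh x < Real.sinh L / Real.cosh L :=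
        strictMono_of_hasDerivAt_pos hasDerivAt_sinh_div_cosh
          (fun y => div_pos one_pos (pow_pos (Real.cosh_pos y) 2)) hx.2
      have h2 : L * (Real.sinh L / Real.cosh L) = 1 := by
        rw [← Real.tanh_eq_sinh_div_cosh]; exact hL1
      have h3 : 0 < Real.sinh x / Real.cosh x :=
        div_pos (Real.sinh_pos_iff.2 hx.1) (Real.cosh_pos x)
      nlinarith [hx.1, hx.2])
    (by
      have h2 : L * (Real.sinh L / Real.cosh L) = 1 := by
        rw [← Real.tanh_eq_sinh_div_cosh]; exact hL1
      rw [h2]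
      have : 0 < Real.sinh L / Real.cosh L + L * (1 / Real.cosh L ^ 2) := by positivity
      nlinarith)
    (robin_neg_of_one_lt hL hc (hUS 0 3) (fun x hx => one_lt_pot hx.1 (by norm_num) (by norm_num))
      (Or.inl ⟨hU0 _ _, hU0' _ _⟩))
  obtain ⟨o0, ho0, hFo0, huo0⟩ := exists_unique_zero hL (M := 0) (Λ := 3) (by norm_num)
    (hWS 0) (hW0 0) (hW0' 0) (Or.inr ⟨rfl, one_pos⟩) (sol_zero_odd L) (by simp) (by simp)
    (fun x hx => div_pos (Real.sinh_pos_iff.2 hx.1) (Real.cosh_pos x))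
    (by
      have h1 : L < Real.sinh L := Real.self_lt_sinh_iff.2 hL
      have h2 : 1 ≤ Real.cosh L := Real.one_le_cosh L
      have : Real.sinh L / Real.cosh L - L * (1 / Real.cosh L ^ 2) =
          (Real.sinh L * Real.cosh L - L) / Real.cosh L ^ 2 := by field_simp
      rw [this]
      refine div_pos ?_ (by positivity)
      nlinarith)
    (robin_neg_of_one_lt hL hc (hWS 0 3) (fun x hx => one_lt_pot hx.1 (by norm_num) (by norm_num))
      (Or.inr ⟨hW0 _ _, hW0' _ _⟩))
  obtain ⟨e1, he1, hFe1, hue1⟩ := exists_unique_zero hL (M := 1) (Λ := 2) (by norm_num)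
    (hUS 1) (hU0 1) (hU0' 1) (Or.inl one_pos) (sol_one_even L) (by simp) (by simp)
    (fun x _ => div_pos one_pos (Real.cosh_pos x))
    (by
      have : L * (-Real.sinh L / Real.cosh L ^ 2) = -(L * Real.sinh L / Real.cosh L ^ 2) := by ring
      rw [this, sub_neg_eq_add]
      positivity)
    (robin_neg_of_one_lt hL hc (hUS 1 2) (fun x hx => one_lt_pot hx.1 (by norm_num) (by norm_num))
      (Or.inl ⟨hU0 _ _, hU0' _ _⟩))
  -- `f` is `f 0` times the even plus `f' 0` times the odd solution, and adding and subtracting its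
  -- two boundary conditions separates the parities.
  have hdec : ∀ (m : ℤ) (lam : ℝ) (f f' : ℝ → ℝ), SolBVP L m lam f f' →
      (∀ x ∈ Icc (-L) L, f x = f 0 * U ((m : ℝ) ^ 2) lam x + f' 0 * W ((m : ℝ) ^ 2) lam x) ∧
      f 0 * (U ((m : ℝ) ^ 2) lam L - L * U' ((m : ℝ) ^ 2) lam L) = 0 ∧
      f' 0 * (W ((m : ℝ) ^ 2) lam L - L * W' ((m : ℝ) ^ 2) lam L) = 0 := by
    rintro m lam f f' ⟨h1, h2, h3, h4⟩
    have Hf : Sol (pot ((m : ℝ) ^ 2) lam) L f f' := fun x hx => ⟨h1 x hx, h2 x hx⟩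
    have hx : ∀ x ∈ Icc (-L) L, _ ∧ _ := fun x hx =>
      Hf.ext ((hUS _ lam).lin (hWS _ lam) (f 0) (f' 0)) (pot_continuous _ lam).continuousOn h0mem
        (by simp [hU0, hW0]) (by simp [hU0', hW0']) hx
    have hp := hx L hLmem
    have hn := hx (-L) ⟨le_rfl, by linarith⟩
    rw [hUe, hWe, hUe', hWe'] at hn
    rw [hp.1, hp.2] at h3
    rw [hn.1, hn.2] at h4
    exact ⟨fun x hxI => (hx x hxI).1, by linarith, by linarith⟩
  have hUsol : ∀ (m : ℤ) (lam : ℝ),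
      U ((m : ℝ) ^ 2) lam L - L * U' ((m : ℝ) ^ 2) lam L = 0 →
      SolBVP L m lam (U ((m : ℝ) ^ 2) lam) (U' ((m : ℝ) ^ 2) lam) ∧
      Nontriv L (U ((m : ℝ) ^ 2) lam) := fun m lam h =>
    ⟨⟨fun x hx => (hUS _ _ x hx).1, fun x hx => (hUS _ _ x hx).2, by linarith,
      by rw [hUe, hUe']; linarith⟩, 0, h0mem, by rw [hU0]; exact one_ne_zero⟩
  have hWsol : ∀ (m : ℤ) (lam : ℝ),
      W ((m : ℝ) ^ 2) lam L - L * W' ((m : ℝ) ^ 2) lam L = 0 →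
      SolBVP L m lam (W ((m : ℝ) ^ 2) lam) (W' ((m : ℝ) ^ 2) lam) ∧
      Nontriv L (W ((m : ℝ) ^ 2) lam) := fun m lam h => by
    refine ⟨⟨fun x hx => (hWS _ _ x hx).1, fun x hx => (hWS _ _ x hx).2, by linarith,
      by rw [hWe, hWe']; linarith⟩, ?_⟩
    by_contra hcon
    have hz : ∀ x ∈ Icc (-L) L, W ((m : ℝ) ^ 2) lam x = 0 := fun x hx => by
      by_contra hne
      exact hcon ⟨x, hx, hne⟩
    have hWL := hz L hLmem
    have hW'L : W' ((m : ℝ) ^ 2) lam L = 0 := by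
      rw [hWL, zero_sub, neg_eq_zero] at h
      exact (mul_eq_zero.1 h).resolve_left hL.ne'
    have := ((hWS _ lam).eq_zero (pot_continuous _ lam).continuousOn hLmem hWL hW'L h0mem).2
    rw [hW0'] at this
    exact one_ne_zero this
  have hnb : ∀ M lam, U M lam L - L * U' M lam L = 0 → W M lam L - L * W' M lam L ≠ 0 :=
    fun M lam h1 h2 => not_both hL (pot_continuous M lam) (hUS M lam) (hWS M lam) (hU0 _ _)
      (hU0' _ _) (hW0 _ _) (hW0' _ _) h1 h2
  have hmem : ∀ (m : ℤ) (lam : ℝ), (m, lam) ∈ S ↔ 0 < lam ∧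
      (U ((m : ℝ) ^ 2) lam L - L * U' ((m : ℝ) ^ 2) lam L = 0 ∨
       W ((m : ℝ) ^ 2) lam L - L * W' ((m : ℝ) ^ 2) lam L = 0) := by
    intro m lam
    rw [hS]
    constructor
    · rintro ⟨hlam, f, f', hf, x, hx, hne⟩
      refine ⟨hlam, ?_⟩
      obtain ⟨h1, h2, h3⟩ := hdec m lam f f' hf
      by_contra! hcon
      apply hne
      rw [h1 x hx, (mul_eq_zero.1 h2).resolve_right hcon.1,
        (mul_eq_zero.1 h3).resolve_right hcon.2]
      ring
    · rintro ⟨hlam, h | h⟩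
      · exact ⟨hlam, _, _, hUsol m lam h⟩
      · exact ⟨hlam, _, _, hWsol m lam h⟩
  refine ⟨e0, o0, e1, he0, ho0, ?_, he1, ?_, ?_⟩
  · rintro rfl
    exact hnb _ _ hFe0 hFo0
  · ext ⟨m, lam⟩
    rw [hmem]
    simp only [mem_insert_iff, mem_singleton_iff, Prod.mk.injEq]
    constructor
    · rintro ⟨hlam, h⟩
      by_cases hm0 : m = 0
      · subst hm0
        simp only [Int.cast_zero, ne_eq, OfNat.ofNat_ne_zero, not_false_eq_true, zero_pow] at h
        rcases h with h | h
        · exact Or.inl ⟨rfl, hue0 lam hlam h⟩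
        · exact Or.inr (Or.inl ⟨rfl, huo0 lam hlam h⟩)
      by_cases hm1 : m = 1 ∨ m = -1
      · have hsq : (m : ℝ) ^ 2 = 1 := by rcases hm1 with rfl | rfl <;> norm_num
        rw [hsq] at h
        rcases h with h | h
        · have := hue1 lam hlam h
          rcases hm1 with hm1 | hm1
          · exact Or.inr (Or.inr (Or.inl ⟨hm1, this⟩))
          · exact Or.inr (Or.inr (Or.inr ⟨hm1, this⟩))
        · exact absurd h (robin_neg_one_odd hL hc hlam (hWS 1 lam) (hW0 _ _) (hW0' _ _)).ne
      · have hm2 : (4 : ℤ) ≤ m ^ 2 := by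
          have : 2 ≤ m ∨ m ≤ -2 := by omega
          rcases this with h | h <;> nlinarith
        have hm2' : (4 : ℝ) ≤ (m : ℝ) ^ 2 := by exact_mod_cast hm2
        have hpot : ∀ x ∈ Ioo 0 L, 1 < pot ((m : ℝ) ^ 2) lam x :=
          fun x hx => one_lt_pot hx.1 hlam.le (by linarith)
        rcases h with h | h
        · exact absurd h (robin_neg_of_one_lt hL hc (hUS _ lam) hpot
            (Or.inl ⟨hU0 _ _, hU0' _ _⟩)).ne
        · exact absurd h (robin_neg_of_one_lt hL hc (hWS _ lam) hpot
            (Or.inr ⟨hW0 _ _, hW0' _ _⟩)).ne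
    · rintro (⟨rfl, rfl⟩ | ⟨rfl, rfl⟩ | ⟨rfl, rfl⟩ | ⟨rfl, rfl⟩)
      · exact ⟨he0.1, Or.inl (by simpa using hFe0)⟩
      · exact ⟨ho0.1, Or.inr (by simpa using hFo0)⟩
      · exact ⟨he1.1, Or.inl (by simpa using hFe1)⟩
      · exact ⟨he1.1, Or.inl (by simpa using hFe1)⟩
  · rintro ⟨m, lam⟩ hp
    obtain ⟨_, h | h⟩ := (hmem m lam).1 hp
    · refine ⟨_, _, (hUsol m lam h).1, (hUsol m lam h).2, fun f f' hf => ⟨f 0, fun x hx => ?_⟩⟩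
      obtain ⟨h1, -, h3⟩ := hdec m lam f f' hf
      rw [h1 x hx, (mul_eq_zero.1 h3).resolve_right (hnb _ _ h)]
      ring
    · refine ⟨_, _, (hWsol m lam h).1, (hWsol m lam h).2, fun f f' hf => ⟨f' 0, fun x hx => ?_⟩⟩
      obtain ⟨h1, h2, -⟩ := hdec m lam f f' hf
      rw [h1 x hx, (mul_eq_zero.1 h2).resolve_right fun h' => hnb _ _ h' h]
      ring
end

section
/- Let L > 0 and let q : [0, L] → ℝ be continuous with q(x) > 1 for all x ∈ [0, L]. If f : [0, L] → ℝ is twice continuously differentiable with f''(x) = q(x)·f(x) for all x, f(0) = 1 and f'(0) = 0, then f(x) > 0 for all x ∈ [0, L], and f'(x) > tanh(x)·f(x) for all x ∈ (0, L]. -/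
/-!
Since `q > 0`, the product `f f'` has derivative `f' ^ 2 + q f ^ 2 ≥ 0` and vanishes at `0`, so it
is nonnegative; hence `f ^ 2` is nondecreasing and `f ^ 2 ≥ 1`. Thus `f` has no zero, and `f 0 = 1`
forces `f > 0`. The Wronskian `f' cosh - f sinh` of `f` against `cosh` then vanishes at `0` and has
derivative `(q - 1) f cosh > 0`, so it is positive on `(0, L]`; dividing by `cosh` gives the
comparison with `tanh`.
-/


/-- Even-case Riccati comparison: if `q > 1` is continuous on `[0, L]` and
`f'' = q f`, `f 0 = 1`, `f' 0 = 0`, then `f > 0` on `[0, L]` and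
`f' x > tanh x · f x` on `(0, L]`. -/
theorem riccati_comparison_even
    (L : ℝ) (hL : 0 < L)
    (q : ℝ → ℝ) (hq : ContinuousOn q (Set.Icc 0 L))
    (hq1 : ∀ x ∈ Set.Icc 0 L, 1 < q x)
    (f f' : ℝ → ℝ)
    (hf : ∀ x ∈ Set.Icc 0 L, HasDerivWithinAt f (f' x) (Set.Icc 0 L) x)
    (hf' : ∀ x ∈ Set.Icc 0 L, HasDerivWithinAt f' (q x * f x) (Set.Icc 0 L) x)
    (hf0 : f 0 = 1) (hf'0 : f' 0 = 0) :
    (∀ x ∈ Set.Icc 0 L, 0 < f x) ∧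
    (∀ x ∈ Set.Ioc 0 L, Real.tanh x * f x < f' x) := by
  have h0 : (0 : ℝ) ∈ Set.Icc 0 L := ⟨le_rfl, hL.le⟩
  have hint : interior (Set.Icc 0 L) ⊆ Set.Icc 0 L := interior_subset
  have hprod : ∀ x ∈ Set.Icc 0 L, 0 ≤ f x * f' x := by
    have hd : ∀ x ∈ Set.Icc 0 L, HasDerivWithinAt (fun y => f y * f' y)
        (f' x * f' x + f x * (q x * f x)) (Set.Icc 0 L) x :=
      fun x hx => (hf x hx).mul (hf' x hx)
    have hm := monotoneOn_of_hasDerivWithinAt_nonneg (convex_Icc 0 L)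
      (fun x hx => (hd x hx).continuousWithinAt)
      (fun x hx => (hd x (hint hx)).mono hint)
      (fun x hx => by
        have hqx := hq1 x (hint hx)
        nlinarith [mul_self_nonneg (f' x), mul_self_nonneg (f x),
          mul_nonneg (by linarith : 0 ≤ q x) (mul_self_nonneg (f x))])
    intro x hx
    simpa [hf'0] using hm h0 hx hx.1
  have hsq : ∀ x ∈ Set.Icc 0 L, 1 ≤ f x * f x := by
    have hd : ∀ x ∈ Set.Icc 0 L, HasDerivWithinAt (fun y => f y * f y)
        (f' x * f x + f x * f' x) (Set.Icc 0 L) x :=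
      fun x hx => (hf x hx).mul (hf x hx)
    have hm := monotoneOn_of_hasDerivWithinAt_nonneg (convex_Icc 0 L)
      (fun x hx => (hd x hx).continuousWithinAt)
      (fun x hx => (hd x (hint hx)).mono hint)
      (fun x hx => by linarith [hprod x (hint hx), mul_comm (f x) (f' x)])
    intro x hx
    simpa [hf0] using hm h0 hx hx.1
  have hpos : ∀ x ∈ Set.Icc 0 L, 0 < f x := by
    intro x hx
    by_contra! hneg
    have hsub : Set.Icc 0 x ⊆ Set.Icc 0 L := Set.Icc_subset_Icc_right hx.2
    obtain ⟨c, hc, hfc⟩ := intermediate_value_Icc' hx.1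
      (fun y hy => ((hf y (hsub hy)).continuousWithinAt).mono hsub)
      (⟨hneg, by rw [hf0]; exact zero_le_one⟩ : (0 : ℝ) ∈ Set.Icc (f x) (f 0))
    have := hsq c (hsub hc)
    rw [hfc] at this
    linarith
  refine ⟨hpos, fun x hx => ?_⟩
  have hd : ∀ x ∈ Set.Icc 0 L,
      HasDerivWithinAt (fun y => f' y * Real.cosh y - f y * Real.sinh y)
        ((q x * f x * Real.cosh x + f' x * Real.sinh x) -
          (f' x * Real.sinh x + f x * Real.cosh x)) (Set.Icc 0 L) x :=
    fun x hx => ((hf' x hx).mul (Real.hasDerivAt_cosh x).hasDerivWithinAt).sub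
      ((hf x hx).mul (Real.hasDerivAt_sinh x).hasDerivWithinAt)
  have hm := strictMonoOn_of_hasDerivWithinAt_pos (convex_Icc 0 L)
    (fun x hx => (hd x hx).continuousWithinAt)
    (fun x hx => (hd x (hint hx)).mono hint)
    (fun x hx => by
      have := mul_pos (mul_pos (sub_pos.2 (hq1 x (hint hx))) (hpos x (hint hx)))
        (Real.cosh_pos x)
      linarith)
  have hW : 0 < f' x * Real.cosh x - f x * Real.sinh x := by
    simpa [hf'0] using hm h0 ⟨hx.1.le, hx.2⟩ hx.1
  rw [Real.tanh_eq_sinh_div_cosh, div_mul_eq_mul_div, div_lt_iff₀ (Real.cosh_pos x)]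
  linarith
end

section
/- Let L > 0 and let q : [0, L] → ℝ be continuous with q(x) > 1 for all x ∈ [0, L]. If f : [0, L] → ℝ is twice continuously differentiable with f''(x) = q(x)·f(x) for all x, f(0) = 0 and f'(0) = 1, then f(x) > 0 for all x ∈ (0, L], and f'(x) > coth(x)·f(x) for all x ∈ (0, L]. -/
/-!
With `W x = f' x * sinh x - f x * cosh x` one has `W 0 = 0` and `W' = (q - 1) * f * sinh`. As soon
as `f > 0` on `(0, L]`, the function `W` is therefore strictly increasing, hence positive on
`(0, L]`, and dividing by `sinh x > 0` gives the bound on `f'`. This replaces the Riccati equation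
for `f' / f`, so no asymptotics at the singular point `0` are needed.

Positivity of `f` follows from that of `f'` (`riccati_deriv_pos`): at a first zero `c` of `f'`,
`f` would be increasing, hence positive, on `(0, c]`, so `f'' = q * f > 0` there and
`f' c > f' 0 = 1`.
-/

/-- A function on `[0, L]` with positive derivative on `(0, c)` strictly increases on `[0, c]`;
the derivative may be taken within `[0, L]`. -/
lemma riccati_strictMonoOn {L c : ℝ} (hc : c ≤ L) {g g' : ℝ → ℝ}
    (hg : ∀ x ∈ Set.Icc 0 L, HasDerivWithinAt g (g' x) (Set.Icc 0 L) x)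
    (hpos : ∀ x ∈ Set.Ioo 0 c, 0 < g' x) : StrictMonoOn g (Set.Icc 0 c) := by
  have hsub : Set.Icc 0 c ⊆ Set.Icc 0 L := Set.Icc_subset_Icc_right hc
  refine strictMonoOn_of_hasDerivWithinAt_pos (f' := g') (convex_Icc 0 c)
    (fun x hx => ((hg x (hsub hx)).mono hsub).continuousWithinAt) ?_ ?_
  · exact fun x hx =>
      (hg x (hsub (interior_subset hx))).mono (interior_subset.trans hsub)
  · rw [interior_Icc]
    exact hpos

lemma riccati_deriv_pos {L : ℝ} {q f f' : ℝ → ℝ}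
    (hq1 : ∀ x ∈ Set.Icc 0 L, 1 < q x)
    (hf : ∀ x ∈ Set.Icc 0 L, HasDerivWithinAt f (f' x) (Set.Icc 0 L) x)
    (hf' : ∀ x ∈ Set.Icc 0 L, HasDerivWithinAt f' (q x * f x) (Set.Icc 0 L) x)
    (hf0 : f 0 = 0) (hf'0 : f' 0 = 1) : ∀ x ∈ Set.Icc 0 L, 0 < f' x := by
  by_contra! ⟨x, hx, hx0⟩
  have hcont : ContinuousOn f' (Set.Icc 0 L) := fun y hy => (hf' y hy).continuousWithinAt
  have hcomp : IsCompact (Set.Icc 0 L ∩ f' ⁻¹' Set.Iic 0) :=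
    isCompact_Icc.of_isClosed_subset
      (hcont.preimage_isClosed_of_isClosed isClosed_Icc isClosed_Iic) Set.inter_subset_left
  obtain ⟨c, ⟨hcI, hc0⟩, hmin⟩ := hcomp.exists_isLeast ⟨x, hx, hx0⟩
  have hc0 : f' c ≤ 0 := hc0
  have hcpos : 0 < c := by
    refine lt_of_le_of_ne hcI.1 ?_
    rintro rfl
    linarith
  have hlt : ∀ y ∈ Set.Ioo 0 c, 0 < f' y := by
    intro y hy
    by_contra! h
    exact absurd (hmin ⟨⟨hy.1.le, hy.2.le.trans hcI.2⟩, h⟩) (not_le.2 hy.2)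
  have hfm := riccati_strictMonoOn hcI.2 hf hlt
  have hfm' := riccati_strictMonoOn hcI.2 hf' fun y hy => by
    have h1 := hq1 y ⟨hy.1.le, hy.2.le.trans hcI.2⟩
    have h2 := hfm ⟨le_rfl, hcpos.le⟩ ⟨hy.1.le, hy.2.le⟩ hy.1
    rw [hf0] at h2
    positivity
  have := hfm' ⟨le_rfl, hcpos.le⟩ ⟨hcpos.le, le_rfl⟩ hcpos
  linarith

/-- Odd-case Riccati comparison: if `q > 1` is continuous on `[0, L]` and
`f'' = q f`, `f 0 = 0`, `f' 0 = 1`, then `f > 0` on `(0, L]` and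
`f' x > coth x · f x` on `(0, L]` (here `coth x = cosh x / sinh x`). -/
theorem riccati_comparison_odd
    (L : ℝ) (hL : 0 < L)
    (q : ℝ → ℝ) (hq : ContinuousOn q (Set.Icc 0 L))
    (hq1 : ∀ x ∈ Set.Icc 0 L, 1 < q x)
    (f f' : ℝ → ℝ)
    (hf : ∀ x ∈ Set.Icc 0 L, HasDerivWithinAt f (f' x) (Set.Icc 0 L) x)
    (hf' : ∀ x ∈ Set.Icc 0 L, HasDerivWithinAt f' (q x * f x) (Set.Icc 0 L) x)
    (hf0 : f 0 = 0) (hf'0 : f' 0 = 1) :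
    (∀ x ∈ Set.Ioc 0 L, 0 < f x) ∧
    (∀ x ∈ Set.Ioc 0 L, (Real.cosh x / Real.sinh x) * f x < f' x) := by
  have hpos : ∀ x ∈ Set.Ioc 0 L, 0 < f x := by
    intro x hx
    have h := riccati_strictMonoOn le_rfl hf
      (fun y hy => riccati_deriv_pos hq1 hf hf' hf0 hf'0 y ⟨hy.1.le, hy.2.le⟩)
      ⟨le_rfl, hL.le⟩ ⟨hx.1.le, hx.2⟩ hx.1
    rwa [hf0] at h
  refine ⟨hpos, fun x hx => ?_⟩
  have hW : ∀ y ∈ Set.Icc 0 L, HasDerivWithinAt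
      (fun z => f' z * Real.sinh z - f z * Real.cosh z)
      ((q y - 1) * f y * Real.sinh y) (Set.Icc 0 L) y := by
    intro y hy
    refine (((hf' y hy).mul (Real.hasDerivAt_sinh y).hasDerivWithinAt).sub
      ((hf y hy).mul (Real.hasDerivAt_cosh y).hasDerivWithinAt)).congr_deriv ?_
    ring
  have h := riccati_strictMonoOn le_rfl hW (fun y hy => by
    have h1 := sub_pos.2 (hq1 y ⟨hy.1.le, hy.2.le⟩)
    have h2 := hpos y ⟨hy.1, hy.2.le⟩
    have h3 := Real.sinh_pos_iff.2 hy.1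
    positivity) ⟨le_rfl, hL.le⟩ ⟨hx.1.le, hx.2⟩ hx.1
  simp only [hf0, Real.sinh_zero, mul_zero, zero_mul, sub_zero] at h
  rw [div_mul_eq_mul_div, div_lt_iff₀ (Real.sinh_pos_iff.2 hx.1)]
  linarith
end

section
/- For every λ > 0, the solution u : [0, L] → ℝ of the initial value problem u''(x) = (λ·cosh²(x) − 2/cosh²(x))·u(x), u(0) = 1, u'(0) = 0 satisfies u(x) > 0 for all x ∈ [0, L]. -/
/-!
For `λ = 0` the initial value problem is solved explicitly by `φ x = 1 - x * tanh x`, which is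
positive on `[0, L)` and vanishes at `L`, with `φ' < 0` on `(0, L]`. Sturm comparison: the Wronskian
`W = u' * φ - u * φ'` satisfies `W 0 = 0` and `W' = λ * cosh² * u * φ`. If `u` were not positive
throughout, let `c` be the least point with `u c ≤ 0`. On `(0, c)` both `u` and `φ` are positive, so
`W c > 0`; as `u c * φ' c ≥ 0` and `φ c ≥ 0`, this forces `u' c > 0`. But `u > 0 ≥ u c` to the left
of `c` forces `u' c ≤ 0`.
-/

theorem hasDerivAt_tanh_real (x : ℝ) :
    HasDerivAt Real.tanh (1 / Real.cosh x ^ 2) x := by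
  have h := (Real.hasDerivAt_sinh x).div (Real.hasDerivAt_cosh x) (Real.cosh_pos x).ne'
  have e : Real.tanh = Real.sinh / Real.cosh := by
    funext y; simp [Real.tanh_eq_sinh_div_cosh]
  rw [e]
  refine h.congr_deriv ?_
  congr 1
  linarith [Real.cosh_sq x]

theorem strictMono_tanh_real : StrictMono Real.tanh :=
  strictMono_of_hasDerivAt_pos hasDerivAt_tanh_real
    fun x => by have := Real.cosh_pos x; positivity

theorem tanh_pos_real {x : ℝ} (hx : 0 < x) : 0 < Real.tanh x := by
  simpa using strictMono_tanh_real hx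

theorem hasDerivAt_phi (x : ℝ) :
    HasDerivAt (fun y => 1 - y * Real.tanh y) (-(Real.tanh x + x / Real.cosh x ^ 2)) x := by
  have h := ((hasDerivAt_id x).mul (hasDerivAt_tanh_real x)).const_sub 1
  refine h.congr_deriv ?_
  simp only [id]
  ring

/-- The function `φ x = 1 - x * tanh x` solves the equation with `λ = 0`. -/
theorem hasDerivAt_phi' (x : ℝ) :
    HasDerivAt (fun y => -(Real.tanh y + y / Real.cosh y ^ 2))
      (-2 / Real.cosh x ^ 2 * (1 - x * Real.tanh x)) x := by
  have hc := (Real.cosh_pos x).ne'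
  have h := ((hasDerivAt_tanh_real x).add
    ((hasDerivAt_id x).div ((Real.hasDerivAt_cosh x).pow 2) (pow_ne_zero 2 hc))).neg
  refine h.congr_deriv ?_
  simp only [id, Pi.pow_apply, Real.tanh_eq_sinh_div_cosh]
  field_simp
  ring

/-- `φ x = 1 - x * tanh x` is positive before its zero `L`. -/
theorem phi_pos {L x : ℝ} (hL1 : L * Real.tanh L = 1) (hx : 0 < x) (hxL : x < L) :
    0 < 1 - x * Real.tanh x := by
  have h1 := strictMono_tanh_real hxL
  have h2 := tanh_pos_real hx
  nlinarith

theorem even_solution_positive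
    (L : ℝ) (hL : 0 < L) (hL1 : L * Real.tanh L = 1)
    (lam : ℝ) (hlam : 0 < lam)
    (u u' : ℝ → ℝ)
    (hu : ∀ x ∈ Set.Icc 0 L, HasDerivWithinAt u (u' x) (Set.Icc 0 L) x)
    (hu' : ∀ x ∈ Set.Icc 0 L, HasDerivWithinAt u'
      ((lam * Real.cosh x ^ 2 - 2 / Real.cosh x ^ 2) * u x) (Set.Icc 0 L) x)
    (hu0 : u 0 = 1) (hu'0 : u' 0 = 0) :
    ∀ x ∈ Set.Icc 0 L, 0 < u x := by
  by_contra! hcon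
  have hcont : ContinuousOn u (Set.Icc 0 L) := fun x hx => (hu x hx).continuousWithinAt
  have hcomp : IsCompact (Set.Icc 0 L ∩ u ⁻¹' Set.Iic 0) :=
    isCompact_Icc.of_isClosed_subset
      (hcont.preimage_isClosed_of_isClosed isClosed_Icc isClosed_Iic) Set.inter_subset_left
  obtain ⟨c, ⟨hcI, hc0⟩, hcmin⟩ := hcomp.exists_isLeast (by
    obtain ⟨x, hx, hx0⟩ := hcon
    exact ⟨x, hx, hx0⟩)
  replace hc0 : u c ≤ 0 := hc0
  have hcpos : 0 < c := by
    rcases hcI.1.eq_or_lt with h | h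
    · rw [← h, hu0] at hc0
      linarith
    · exact h
  have hbefore : ∀ x, 0 ≤ x → x < c → 0 < u x := by
    intro x hx hxc
    by_contra! h
    exact absurd (hcmin ⟨⟨hx, hxc.le.trans hcI.2⟩, h⟩) (not_le.2 hxc)
  set W : ℝ → ℝ := fun x =>
    u' x * (1 - x * Real.tanh x) - u x * (-(Real.tanh x + x / Real.cosh x ^ 2)) with hW
  have hWd : ∀ x ∈ Set.Icc 0 L, HasDerivWithinAt W
      (lam * Real.cosh x ^ 2 * u x * (1 - x * Real.tanh x)) (Set.Icc 0 L) x := by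
    intro x hx
    have h := ((hu' x hx).mul (hasDerivAt_phi x).hasDerivWithinAt).sub
      ((hu x hx).mul (hasDerivAt_phi' x).hasDerivWithinAt)
    refine h.congr_deriv ?_
    ring
  have hWmono : StrictMonoOn W (Set.Icc 0 c) := by
    refine strictMonoOn_of_hasDerivWithinAt_pos (convex_Icc 0 c)
      (f' := fun x => lam * Real.cosh x ^ 2 * u x * (1 - x * Real.tanh x)) ?_ ?_ ?_
    · exact fun x hx => ((hWd x ⟨hx.1, hx.2.trans hcI.2⟩).continuousWithinAt).mono
        (Set.Icc_subset_Icc_right hcI.2)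
    · intro x hx
      have hx' := interior_subset hx
      exact (hWd x ⟨hx'.1, hx'.2.trans hcI.2⟩).mono
        (interior_subset.trans (Set.Icc_subset_Icc_right hcI.2))
    · intro x hx
      rw [interior_Icc] at hx
      have h1 := hbefore x hx.1.le hx.2
      have h2 := phi_pos hL1 hx.1 (hx.2.trans_le hcI.2)
      have h3 := Real.cosh_pos x
      positivity
  have hWc : 0 < W c := by
    have h := hWmono ⟨le_rfl, hcpos.le⟩ ⟨hcpos.le, le_rfl⟩ hcpos
    simpa [hW, hu'0] using h
  have hφ : 0 ≤ 1 - c * Real.tanh c := by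
    rcases hcI.2.eq_or_lt with h | h
    · rw [h, hL1, sub_self]
    · exact (phi_pos hL1 hcpos h).le
  have hφ' : 0 < Real.tanh c + c / Real.cosh c ^ 2 := by
    have h1 := tanh_pos_real hcpos
    have h2 := Real.cosh_pos c
    positivity
  have hup : u' c ≤ 0 := by
    have hd : HasDerivWithinAt u (u' c) (Set.Ico 0 c) c :=
      (hu c hcI).mono fun x hx => ⟨hx.1, hx.2.le.trans hcI.2⟩
    rw [hasDerivWithinAt_iff_tendsto_slope' (by simp)] at hd
    -- `c` is an accumulation point of `[0, c)`, so the sign of the slopes passes to the limit.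
    have : (nhdsWithin c (Set.Ico 0 c)).NeBot := by
      rw [← mem_closure_iff_nhdsWithin_neBot, closure_Ico hcpos.ne]
      exact ⟨hcpos.le, le_rfl⟩
    refine le_of_tendsto hd ?_
    filter_upwards [self_mem_nhdsWithin] with x hx
    rw [slope_def_field]
    have := hbefore x hx.1 hx.2
    exact div_nonpos_of_nonneg_of_nonpos (by linarith) (by linarith [hx.2])
  have h1 : u' c * (1 - c * Real.tanh c) ≤ 0 := mul_nonpos_of_nonpos_of_nonneg hup hφ
  have h2 : u c * (Real.tanh c + c / Real.cosh c ^ 2) ≤ 0 :=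
    mul_nonpos_of_nonpos_of_nonneg hc0 hφ'.le
  simp only [hW] at hWc
  linarith
end

section
/- For λ > 0, let u_λ : [0, L] → ℝ denote the solution of u''(x) = (λ·cosh²(x) − 2/cosh²(x))·u(x) with u(0) = 1, u'(0) = 0 (so u_λ(x) > 0 on [0, L]). Then the function φ(λ) = u_λ'(L)/u_λ(L) is strictly increasing on (0, ∞), and φ(λ) → −∞ as λ → 0⁺. -/
/-!
Everything follows from one Wronskian identity. If `u₁`, `u₂` are the even solutions for `lam₁`,
`lam₂`, then `W = u₂' u₁ - u₂ u₁'` satisfies `W 0 = 0` and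
`W' = (lam₂ - lam₁) cosh² x · u₁ u₂` (`IVPEven.hasDerivWithinAt_wronskian`).

At `lam = 0` the even solution is `v x = 1 - x tanh x` (`ivpEven_zero`), which decreases
strictly from `1` to `v L = 0`. Comparing a solution `u` with `v` up to the first point where
`u ≤ 0` shows that `u > 0` on `[0, L]` when `lam > 0` (`IVPEven.pos`). Comparing two positive
solutions, `W L > 0` says exactly that `u₁' L / u₁ L < u₂' L / u₂ L`.

For the limit, once `lam cosh⁴ L ≤ 1` the solution `u` is concave, hence nonincreasing and at
most `1`, and `u' L ≤ (u L - 1) / L`. The Wronskian with `v` at `L` equals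
`u L · (tanh L + L / cosh² L)` and is at most `lam · L cosh² L`, so `u L = O(lam)`, while
`u' L` stays below `-1 / (2 L)`.
-/

/-- `u` (with derivative `u'`) solves `u'' = (λ cosh²x − 2/cosh²x) u` on `[0, L]`
with `u 0 = 1`, `u' 0 = 0`. -/
def IVPEven (L lam : ℝ) (u u' : ℝ → ℝ) : Prop :=
  (∀ x ∈ Set.Icc 0 L, HasDerivWithinAt u (u' x) (Set.Icc 0 L) x) ∧
  (∀ x ∈ Set.Icc 0 L, HasDerivWithinAt u'
    ((lam * Real.cosh x ^ 2 - 2 / Real.cosh x ^ 2) * u x) (Set.Icc 0 L) x) ∧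
  u 0 = 1 ∧ u' 0 = 0

namespace IVPEven

variable {L lam lam₁ lam₂ : ℝ} {u u' u₁ u₁' u₂ u₂' : ℝ → ℝ}

lemma continuousOn (h : IVPEven L lam u u') : ContinuousOn u (Set.Icc 0 L) :=
  fun x hx => (h.1 x hx).continuousWithinAt

lemma hasDerivWithinAt_wronskian (h₁ : IVPEven L lam₁ u₁ u₁') (h₂ : IVPEven L lam₂ u₂ u₂')
    {x : ℝ} (hx : x ∈ Set.Icc 0 L) :
    HasDerivWithinAt (fun y => u₂' y * u₁ y - u₂ y * u₁' y)
      ((lam₂ - lam₁) * Real.cosh x ^ 2 * (u₁ x * u₂ x)) (Set.Icc 0 L) x := by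
  refine (((h₂.2.1 x hx).mul (h₁.1 x hx)).sub ((h₂.1 x hx).mul (h₁.2.1 x hx))).congr_deriv ?_
  ring

/-- The Wronskian is positive at the right end of any interval `[0, a]` on whose interior both
solutions are positive. -/
lemma wronskian_pos (h₁ : IVPEven L lam₁ u₁ u₁') (h₂ : IVPEven L lam₂ u₂ u₂')
    (hlam : lam₁ < lam₂) {a : ℝ} (ha : 0 < a) (haL : a ≤ L)
    (hp₁ : ∀ x ∈ Set.Ioo 0 a, 0 < u₁ x) (hp₂ : ∀ x ∈ Set.Ioo 0 a, 0 < u₂ x) :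
    0 < u₂' a * u₁ a - u₂ a * u₁' a := by
  have hsub : Set.Icc 0 a ⊆ Set.Icc 0 L := Set.Icc_subset_Icc_right haL
  have hmono : StrictMonoOn (fun y => u₂' y * u₁ y - u₂ y * u₁' y) (Set.Icc 0 a) := by
    refine strictMonoOn_of_hasDerivWithinAt_pos (convex_Icc 0 a)
      (fun x hx => ((hasDerivWithinAt_wronskian h₁ h₂ (hsub hx)).mono hsub).continuousWithinAt)
      (fun x hx => (hasDerivWithinAt_wronskian h₁ h₂ (hsub (interior_subset hx))).mono
        (interior_subset.trans hsub)) ?_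
    intro x hx
    rw [interior_Icc] at hx
    have := hp₁ x hx
    have := hp₂ x hx
    have := Real.cosh_pos x
    have : 0 < lam₂ - lam₁ := sub_pos.2 hlam
    positivity
  have := hmono (Set.left_mem_Icc.2 ha.le) (Set.right_mem_Icc.2 ha.le) ha
  simpa [h₁.2.2.2, h₂.2.2.2] using this

end IVPEven

/-- The derivative of `1 - x tanh x`, with `tanh` written as `sinh / cosh`. -/
lemma hasDerivAt_evenZero (x : ℝ) :
    HasDerivAt (fun x => 1 - x * (Real.sinh x / Real.cosh x))
      (-(Real.sinh x / Real.cosh x) - x / Real.cosh x ^ 2) x := by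
  have hc := (Real.cosh_pos x).ne'
  refine (((hasDerivAt_id x).mul
    ((Real.hasDerivAt_sinh x).div (Real.hasDerivAt_cosh x) hc)).const_sub 1).congr_deriv ?_
  have := Real.cosh_sq x
  simp only [id, Pi.div_apply]
  field_simp
  rw [this]
  ring

/-- `1 - x tanh x` is the even solution for `lam = 0`. -/
lemma ivpEven_zero (L : ℝ) :
    IVPEven L 0 (fun x => 1 - x * (Real.sinh x / Real.cosh x))
      (fun x => -(Real.sinh x / Real.cosh x) - x / Real.cosh x ^ 2) := by
  refine ⟨fun x _ => (hasDerivAt_evenZero x).hasDerivWithinAt, fun x _ => ?_, by simp, by simp⟩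
  have hc := (Real.cosh_pos x).ne'
  refine HasDerivAt.hasDerivWithinAt ?_
  refine ((((Real.hasDerivAt_sinh x).div (Real.hasDerivAt_cosh x) hc).neg).sub
    ((hasDerivAt_id x).div ((Real.hasDerivAt_cosh x).pow 2) (pow_ne_zero 2 hc))).congr_deriv ?_
  have := Real.cosh_sq x
  simp only [id, Nat.cast_ofNat, Pi.pow_apply]
  field_simp
  have h2 : Real.sinh x ^ 2 = Real.cosh x ^ 2 - 1 := by linarith
  simp only [h2]
  ring

lemma evenZero_deriv_neg {x : ℝ} (hx : 0 < x) :
    -(Real.sinh x / Real.cosh x) - x / Real.cosh x ^ 2 < 0 := by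
  have := Real.cosh_pos x
  have := Real.sinh_pos_iff.2 hx
  have : 0 < Real.sinh x / Real.cosh x := by positivity
  have : 0 < x / Real.cosh x ^ 2 := by positivity
  linarith

lemma evenZero_strictAntiOn (L : ℝ) :
    StrictAntiOn (fun x => 1 - x * (Real.sinh x / Real.cosh x)) (Set.Icc 0 L) := by
  refine strictAntiOn_of_hasDerivWithinAt_neg (convex_Icc 0 L)
    (fun x _ => (hasDerivAt_evenZero x).continuousAt.continuousWithinAt)
    (fun x _ => (hasDerivAt_evenZero x).hasDerivWithinAt) ?_
  intro x hx
  rw [interior_Icc] at hx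
  exact evenZero_deriv_neg hx.1

lemma evenZero_pos {L : ℝ} (hL1 : L * (Real.sinh L / Real.cosh L) = 1) {x : ℝ}
    (hx : 0 ≤ x) (hxL : x < L) : 0 < 1 - x * (Real.sinh x / Real.cosh x) := by
  have := evenZero_strictAntiOn L ⟨hx, hxL.le⟩ ⟨hx.trans hxL.le, le_rfl⟩ hxL
  simpa [hL1] using this

/-- The even solution stays positive on `[0, L]`, by Sturm comparison with `1 - x tanh x`. -/
lemma IVPEven.pos {L lam : ℝ} {u u' : ℝ → ℝ} (hL1 : L * (Real.sinh L / Real.cosh L) = 1)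
    (hlam : 0 < lam) (h : IVPEven L lam u u') : ∀ x ∈ Set.Icc 0 L, 0 < u x := by
  by_contra! hcon
  have hcomp : IsCompact (Set.Icc 0 L ∩ u ⁻¹' Set.Iic 0) :=
    isCompact_Icc.of_isClosed_subset
      (h.continuousOn.preimage_isClosed_of_isClosed isClosed_Icc isClosed_Iic)
      Set.inter_subset_left
  obtain ⟨x, hxI, hux⟩ := hcon
  obtain ⟨a, ⟨haI, hua⟩, hmin⟩ := hcomp.exists_isLeast ⟨x, hxI, hux⟩
  replace hua : u a ≤ 0 := hua
  have hbefore : ∀ y ∈ Set.Ico 0 a, 0 < u y := by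
    intro y hy
    by_contra! hle
    exact absurd (hmin ⟨⟨hy.1, hy.2.le.trans haI.2⟩, hle⟩) (not_le.2 hy.2)
  have ha : 0 < a := by
    refine lt_of_le_of_ne haI.1 ?_
    rintro rfl
    linarith [h.2.2.1]
  have hW := (ivpEven_zero L).wronskian_pos h hlam ha haI.2
    (fun y hy => evenZero_pos hL1 hy.1.le (hy.2.trans_le haI.2))
    (fun y hy => hbefore y ⟨hy.1.le, hy.2⟩)
  have hva : 0 ≤ 1 - a * (Real.sinh a / Real.cosh a) := by
    rcases haI.2.eq_or_lt with rfl | hlt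
    · exact (sub_eq_zero.2 hL1.symm).ge
    · exact (evenZero_pos hL1 ha.le hlt).le
  -- The left difference quotients of `u` at `a` are nonpositive.
  have hderiv : u' a ≤ 0 := by
    have hd : HasDerivWithinAt u (u' a) (Set.Ico 0 a) a :=
      (h.1 a haI).mono fun y hy => ⟨hy.1, hy.2.le.trans haI.2⟩
    rw [hasDerivWithinAt_iff_tendsto_slope' (by simp)] at hd
    have hne : (nhdsWithin a (Set.Ico 0 a)).NeBot := by
      rw [nhdsWithin_Ico_eq_nhdsLT ha]
      infer_instance
    refine le_of_tendsto hd ?_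
    filter_upwards [self_mem_nhdsWithin] with y hy
    rw [slope_def_field]
    exact div_nonpos_of_nonneg_of_nonpos (by linarith [hbefore y hy]) (by linarith [hy.2])
  have hv' := evenZero_deriv_neg ha
  have h1 := mul_nonpos_of_nonpos_of_nonneg hderiv hva
  have h2 := mul_nonneg_of_nonpos_of_nonpos hua hv'.le
  linarith

/-- For `lam cosh⁴ L ≤ 1` the potential is nonpositive on `[0, L]`, so the solution is concave. -/
lemma IVPEven.antitoneOn_deriv {L lam : ℝ} {u u' : ℝ → ℝ} (h : IVPEven L lam u u')
    (hpos : ∀ x ∈ Set.Icc 0 L, 0 < u x) (hlam : 0 < lam) (hsmall : lam * Real.cosh L ^ 4 ≤ 1) :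
    AntitoneOn u' (Set.Icc 0 L) := by
  refine antitoneOn_of_hasDerivWithinAt_nonpos (convex_Icc 0 L)
    (fun x hx => (h.2.1 x hx).continuousWithinAt)
    (fun x hx => (h.2.1 x (interior_subset hx)).mono interior_subset) ?_
  intro x hx
  have hxI := interior_subset hx
  have hc := Real.cosh_pos x
  have hcL : Real.cosh x ≤ Real.cosh L := by
    rw [Real.cosh_le_cosh, abs_of_nonneg hxI.1, abs_of_nonneg (hxI.1.trans hxI.2)]
    exact hxI.2
  have h4 : lam * Real.cosh x ^ 4 ≤ 1 := le_trans (by gcongr) hsmall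
  refine mul_nonpos_of_nonpos_of_nonneg ?_ (hpos x hxI).le
  rw [sub_nonpos, le_div_iff₀ (by positivity)]
  nlinarith

lemma IVPEven.le_one {L lam : ℝ} {u u' : ℝ → ℝ} (h : IVPEven L lam u u')
    (hanti : AntitoneOn u' (Set.Icc 0 L)) {x : ℝ} (hx : x ∈ Set.Icc 0 L) : u x ≤ 1 := by
  have h0 : (0 : ℝ) ∈ Set.Icc 0 L := ⟨le_rfl, hx.1.trans hx.2⟩
  have hu : AntitoneOn u (Set.Icc 0 L) := by
    refine antitoneOn_of_hasDerivWithinAt_nonpos (convex_Icc 0 L) h.continuousOn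
      (fun x hx => (h.1 x (interior_subset hx)).mono interior_subset) ?_
    intro y hy
    have hyI := interior_subset hy
    exact (hanti h0 hyI hyI.1).trans_eq h.2.2.2
  exact (hu h0 hx hx.1).trans_eq h.2.2.1

/-- A concave solution lies above its chord: `u' L ≤ (u L - 1) / L`. -/
lemma IVPEven.deriv_mul_le {L lam : ℝ} {u u' : ℝ → ℝ} (hL : 0 < L) (h : IVPEven L lam u u')
    (hanti : AntitoneOn u' (Set.Icc 0 L)) : u' L * L ≤ u L - 1 := by
  have hLI : L ∈ Set.Icc 0 L := ⟨hL.le, le_rfl⟩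
  have hd : ∀ x ∈ Set.Icc 0 L,
      HasDerivWithinAt (fun y => u y - u' L * y) (u' x - u' L) (Set.Icc 0 L) x := fun x hx =>
    ((h.1 x hx).sub ((hasDerivWithinAt_id x _).const_mul (u' L))).congr_deriv (by ring)
  have hm : MonotoneOn (fun y => u y - u' L * y) (Set.Icc 0 L) := by
    refine monotoneOn_of_hasDerivWithinAt_nonneg (convex_Icc 0 L)
      (fun x hx => (hd x hx).continuousWithinAt)
      (fun x hx => (hd x (interior_subset hx)).mono interior_subset) ?_
    intro x hx
    have hxI := interior_subset hx
    exact sub_nonneg.2 (hanti hxI hLI hxI.2)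
  have := hm ⟨le_rfl, hL.le⟩ hLI hL.le
  simp only [h.2.2.1, mul_zero] at this
  linarith

/-- A solution bounded by `1` satisfies `u L = O(lam)`, by integrating the Wronskian with
`1 - x tanh x`. -/
lemma IVPEven.endpoint_le {L lam : ℝ} {u u' : ℝ → ℝ} (hL : 0 < L)
    (hL1 : L * (Real.sinh L / Real.cosh L) = 1) (hlam : 0 < lam) (h : IVPEven L lam u u')
    (hpos : ∀ x ∈ Set.Icc 0 L, 0 < u x) (hle : ∀ x ∈ Set.Icc 0 L, u x ≤ 1) :
    u L * (Real.sinh L / Real.cosh L + L / Real.cosh L ^ 2) ≤ lam * (Real.cosh L ^ 2 * L) := by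
  have hz := ivpEven_zero L
  have hd := fun x (hx : x ∈ Set.Icc 0 L) =>
    ((hasDerivWithinAt_id x _).const_mul (lam * Real.cosh L ^ 2)).sub
      (hz.hasDerivWithinAt_wronskian h hx)
  have hm := monotoneOn_of_hasDerivWithinAt_nonneg (convex_Icc 0 L)
      (fun x hx => (hd x hx).continuousWithinAt)
      (fun x hx => (hd x (interior_subset hx)).mono interior_subset) (by
    intro x hx
    have hxI := interior_subset hx
    rw [interior_Icc] at hx
    have hv := evenZero_pos hL1 hx.1.le hx.2
    have hv1 : 1 - x * (Real.sinh x / Real.cosh x) ≤ 1 := by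
      have := Real.sinh_pos_iff.2 hx.1
      have := Real.cosh_pos x
      have := hx.1
      have : 0 ≤ x * (Real.sinh x / Real.cosh x) := by positivity
      linarith
    have hcL : Real.cosh x ≤ Real.cosh L := by
      rw [Real.cosh_le_cosh, abs_of_nonneg hxI.1, abs_of_nonneg hL.le]
      exact hxI.2
    have hc := Real.cosh_pos x
    have huv : (1 - x * (Real.sinh x / Real.cosh x)) * u x ≤ 1 :=
      mul_le_one₀ hv1 (hpos x hxI).le (hle x hxI)
    have huv0 : 0 ≤ (1 - x * (Real.sinh x / Real.cosh x)) * u x :=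
      mul_nonneg hv.le (hpos x hxI).le
    rw [sub_nonneg, sub_zero]
    gcongr)
  have := hm (Set.left_mem_Icc.2 hL.le) (Set.right_mem_Icc.2 hL.le) hL.le
  simp [h.2.2.2, hL1] at this
  linarith

/-- The boundary value `φ(λ) = u_λ'(L)/u_λ(L)` of the even solution is strictly increasing
in `λ` on `(0, ∞)`, and tends to `−∞` as `λ → 0⁺`. Here `L` is the unique positive real
with `L·tanh L = 1`. -/
theorem phi_strict_mono_and_tendsto_neg_infty
    (L : ℝ) (hL : 0 < L) (hL1 : L * Real.tanh L = 1) :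
    (∀ lam₁ lam₂ : ℝ, 0 < lam₁ → lam₁ < lam₂ →
      ∀ u₁ u₁' u₂ u₂' : ℝ → ℝ, IVPEven L lam₁ u₁ u₁' → IVPEven L lam₂ u₂ u₂' →
        u₁' L / u₁ L < u₂' L / u₂ L) ∧
    (∀ C : ℝ, ∃ δ > (0 : ℝ), ∀ lam : ℝ, 0 < lam → lam < δ →
      ∀ u u' : ℝ → ℝ, IVPEven L lam u u' → u' L / u L < C) := by
  rw [Real.tanh_eq_sinh_div_cosh] at hL1
  have hLI : L ∈ Set.Icc 0 L := ⟨hL.le, le_rfl⟩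
  constructor
  · intro lam₁ lam₂ h0 hlt u₁ u₁' u₂ u₂' h₁ h₂
    have hp₁ := h₁.pos hL1 h0
    have hp₂ := h₂.pos hL1 (h0.trans hlt)
    have hW := h₁.wronskian_pos h₂ hlt hL le_rfl
      (fun x hx => hp₁ x (Set.Ioo_subset_Icc_self hx))
      (fun x hx => hp₂ x (Set.Ioo_subset_Icc_self hx))
    rw [div_lt_div_iff₀ (hp₁ L hLI) (hp₂ L hLI)]
    linarith
  · intro C
    set D := Real.sinh L / Real.cosh L + L / Real.cosh L ^ 2 with hD
    have hc := Real.cosh_pos L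
    have hDpos : 0 < D := by
      have := evenZero_deriv_neg hL
      linarith
    have hC : 0 ≤ |C| := abs_nonneg C
    -- `u L ≤ ε` forces `u' L ≤ -1 / (2 L) ≤ -(|C| + 1) * u L`.
    obtain ⟨ε, hε, hε1, hε2⟩ : ∃ ε > (0 : ℝ), ε ≤ 1 / 2 ∧ ε ≤ 1 / (2 * L * (|C| + 1)) :=
      ⟨min (1 / 2) (1 / (2 * L * (|C| + 1))), lt_min (by norm_num) (by positivity),
        min_le_left _ _, min_le_right _ _⟩
    refine ⟨min (1 / Real.cosh L ^ 4) (ε * D / (Real.cosh L ^ 2 * L)),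
      lt_min (by positivity) (by positivity), ?_⟩
    intro lam hlam hlt u u' h
    have hs1 := (hlt.trans_le (min_le_left _ _)).le
    have hs2 := (hlt.trans_le (min_le_right _ _)).le
    rw [le_div_iff₀ (by positivity)] at hs1 hs2
    have hpos := h.pos hL1 hlam
    have hanti := h.antitoneOn_deriv hpos hlam hs1
    have hend := h.endpoint_le hL hL1 hlam hpos (fun x hx => h.le_one hanti hx)
    have hu : u L ≤ ε := le_of_mul_le_mul_right (hend.trans hs2) hDpos
    have hchord := h.deriv_mul_le hL hanti
    have huL := hpos L hLI
    have hu2 := hu.trans hε2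
    rw [le_div_iff₀ (by positivity)] at hu2
    rw [div_lt_iff₀ huL]
    have hstep : u' L ≤ -((|C| + 1) * u L) := by
      refine le_of_mul_le_mul_right ?_ hL
      linarith
    have : -|C| * u L ≤ C * u L := mul_le_mul_of_nonneg_right (neg_abs_le C) huL.le
    linarith
end

section
/- For every λ > 0, the solution y : [0, L] → ℝ of the initial value problem y''(x) = (1 + λ·cosh²(x) − 2/cosh²(x))·y(x), y(0) = 0, y'(0) = 1 satisfies y(x) > 0 for all x ∈ (0, L] and L·y'(L) > y(L). In particular, for no λ > 0 does there exist a nontrivial odd solution of the m = 1 equation on [−L, L] satisfying the Robin boundary conditions f(±L) = ±L·f'(±L). -/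
/-!
At `λ = 0` the mode-one equation has the explicit odd solution `g x = sinh x + x / cosh x`, which
is positive for `x > 0` and, because `L * tanh L = 1`, satisfies `g L = L * g' L`. For `λ > 0`
the Wronskian `W = y' g - y g'` vanishes at `0` and has derivative `λ cosh² y g`
(`hasDerivWithinAt_wronskian`). Hence, as long as `y > 0`, `W` is positive and the ratio `y / g`,
whose derivative is `W / g²`, is strictly increasing; so `y` cannot reach a first zero, and
`W L > 0` gives `y L < L * y' L` on replacing `L * g' L` by `g L`
(`pos_and_lt_of_initial_value`).

An odd solution `f` has `f 0 = 0`. If `f' 0 ≠ 0`, then `f / f' 0` is the solution just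
treated, and its strict inequality contradicts the Robin condition. If `f' 0 = 0`, then `f = 0` by
Grönwall's inequality (`eq_zero_of_initial_value_zero`).
-/

/-- The odd solution, with slope `2` at the origin, of the mode-one equation at `λ = 0`. -/
noncomputable def oddSol (x : ℝ) : ℝ := Real.sinh x + x / Real.cosh x

/-- The derivative of `oddSol`. -/
noncomputable def oddSol' (x : ℝ) : ℝ :=
  Real.cosh x + (Real.cosh x - x * Real.sinh x) / Real.cosh x ^ 2

lemma hasDerivAt_oddSol (x : ℝ) : HasDerivAt oddSol (oddSol' x) x := by
  have hc : Real.cosh x ≠ 0 := (Real.cosh_pos x).ne'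
  have h := (Real.hasDerivAt_sinh x).add ((hasDerivAt_id x).div (Real.hasDerivAt_cosh x) hc)
  refine h.congr_deriv ?_
  simp [oddSol']

lemma hasDerivAt_oddSol' (x : ℝ) :
    HasDerivAt oddSol' ((1 - 2 / Real.cosh x ^ 2) * oddSol x) x := by
  have hc : Real.cosh x ≠ 0 := (Real.cosh_pos x).ne'
  have h := (Real.hasDerivAt_cosh x).add
    (((Real.hasDerivAt_cosh x).sub ((hasDerivAt_id x).mul (Real.hasDerivAt_sinh x))).div
      ((Real.hasDerivAt_cosh x).pow 2) (pow_ne_zero 2 hc))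
  refine h.congr_deriv ?_
  have e : Real.sinh x ^ 2 = Real.cosh x ^ 2 - 1 := by
    have := Real.cosh_sq x
    linarith
  simp only [oddSol, id, Pi.mul_apply, Pi.sub_apply, Pi.pow_apply]
  field_simp
  linear_combination (2 * x * Real.cosh x) * e

lemma oddSol_zero : oddSol 0 = 0 := by simp [oddSol]

lemma oddSol_pos {x : ℝ} (hx : 0 < x) : 0 < oddSol x :=
  add_pos (Real.sinh_pos_iff.2 hx) (div_pos hx (Real.cosh_pos x))

/-- The explicit solution satisfies the Robin condition exactly at `L = coth L`. -/
lemma oddSol_robin {L : ℝ} (hL1 : L * Real.tanh L = 1) : L * oddSol' L = oddSol L := by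
  have hc : Real.cosh L ≠ 0 := (Real.cosh_pos L).ne'
  have h : L * Real.sinh L = Real.cosh L := by
    rw [Real.tanh_eq_sinh_div_cosh] at hL1
    field_simp at hL1
    exact hL1
  have hs : Real.sinh L ≠ 0 := by
    intro h0
    rw [h0, mul_zero] at h
    exact hc h.symm
  have e := Real.cosh_sq L
  simp only [oddSol, oddSol', h, sub_self, zero_div, add_zero]
  field_simp
  -- After multiplication by `sinh L`, every `L * sinh L` becomes `cosh L`.
  apply mul_right_cancel₀ hs
  linear_combination (Real.cosh L ^ 2 - 1) * h + Real.cosh L * e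

/-- The Wronskian identity `(y' g - y g')' = λ cosh² y g`. -/
lemma hasDerivWithinAt_wronskian {lam x : ℝ} {s : Set ℝ} {y y' : ℝ → ℝ}
    (h1 : HasDerivWithinAt y (y' x) s x)
    (h2 : HasDerivWithinAt y'
      ((1 + lam * Real.cosh x ^ 2 - 2 / Real.cosh x ^ 2) * y x) s x) :
    HasDerivWithinAt (fun z => y' z * oddSol z - y z * oddSol' z)
      (lam * Real.cosh x ^ 2 * (y x * oddSol x)) s x := by
  refine ((h2.mul (hasDerivAt_oddSol x).hasDerivWithinAt).sub
    (h1.mul (hasDerivAt_oddSol' x).hasDerivWithinAt)).congr_deriv ?_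
  ring

/-- As long as `y` stays positive, so does its Wronskian with the explicit solution. -/
lemma wronskian_pos {L t lam : ℝ} (hlam : 0 < lam) {y y' : ℝ → ℝ}
    (h1 : ∀ x ∈ Set.Icc 0 L, HasDerivWithinAt y (y' x) (Set.Icc 0 L) x)
    (h2 : ∀ x ∈ Set.Icc 0 L, HasDerivWithinAt y'
      ((1 + lam * Real.cosh x ^ 2 - 2 / Real.cosh x ^ 2) * y x) (Set.Icc 0 L) x)
    (y0 : y 0 = 0) (ht : 0 < t) (htL : t ≤ L) (hpos : ∀ x ∈ Set.Ioo 0 t, 0 < y x) :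
    0 < y' t * oddSol t - y t * oddSol' t := by
  have hW : ∀ x ∈ Set.Icc 0 L, _ := fun x hx => hasDerivWithinAt_wronskian (h1 x hx) (h2 x hx)
  have hmono : StrictMonoOn (fun z => y' z * oddSol z - y z * oddSol' z) (Set.Icc 0 t) := by
    refine strictMonoOn_of_hasDerivWithinAt_pos (convex_Icc 0 t)
      (f' := fun x => lam * Real.cosh x ^ 2 * (y x * oddSol x)) ?_ ?_ ?_
    · intro x hx
      exact (hW x ⟨hx.1, hx.2.trans htL⟩).continuousWithinAt.mono (Set.Icc_subset_Icc_right htL)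
    · intro x hx
      rw [interior_Icc] at hx ⊢
      exact (hW x ⟨hx.1.le, hx.2.le.trans htL⟩).mono
        (Set.Ioo_subset_Icc_self.trans (Set.Icc_subset_Icc_right htL))
    · intro x hx
      rw [interior_Icc] at hx
      have := Real.cosh_pos x
      have := hpos x hx
      have := oddSol_pos hx.1
      positivity
  have := hmono ⟨le_rfl, ht.le⟩ ⟨ht.le, le_rfl⟩ ht
  simpa [y0, oddSol_zero] using this

/-- The initial value problem: positivity on `(0, L]` and the strict Robin inequality. -/
lemma pos_and_lt_of_initial_value {L lam : ℝ} (hL : 0 < L) (hL1 : L * Real.tanh L = 1)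
    (hlam : 0 < lam) {y y' : ℝ → ℝ}
    (h1 : ∀ x ∈ Set.Icc 0 L, HasDerivWithinAt y (y' x) (Set.Icc 0 L) x)
    (h2 : ∀ x ∈ Set.Icc 0 L, HasDerivWithinAt y'
      ((1 + lam * Real.cosh x ^ 2 - 2 / Real.cosh x ^ 2) * y x) (Set.Icc 0 L) x)
    (y0 : y 0 = 0) (y0' : y' 0 = 1) :
    (∀ x ∈ Set.Ioc 0 L, 0 < y x) ∧ y L < L * y' L := by
  have hycont : ContinuousOn y (Set.Icc 0 L) := fun x hx => (h1 x hx).continuousWithinAt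
  -- Since `y 0 = 0` and `y' 0 = 1`, the function `y` is positive just to the right of `0`.
  obtain ⟨d, hd, hdpos⟩ : ∃ d > 0, ∀ x ∈ Set.Ioo 0 d, x ≤ L → 0 < y x := by
    have h := h1 0 ⟨le_rfl, hL.le⟩
    rw [y0', hasDerivWithinAt_iff_tendsto_slope] at h
    have h' := h.eventually (lt_mem_nhds one_pos)
    rw [eventually_nhdsWithin_iff, Metric.eventually_nhds_iff] at h'
    obtain ⟨d, hd, h'⟩ := h'
    refine ⟨d, hd, fun x hx hxL => ?_⟩
    have := h' (y := x) (by simpa [abs_of_pos hx.1] using hx.2) ⟨⟨hx.1.le, hxL⟩, hx.1.ne'⟩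
    rw [slope_def_field, y0, sub_zero, sub_zero] at this
    exact (div_pos_iff_of_pos_right hx.1).1 this
  have hpos : ∀ x ∈ Set.Ioc 0 L, 0 < y x := by
    intro b hb
    by_contra hneg
    have hdb : d ≤ b := by
      by_contra hlt
      exact hneg (hdpos b ⟨hb.1, not_le.1 hlt⟩ hb.2)
    have hsub : Set.Icc d b ⊆ Set.Icc 0 L := Set.Icc_subset_Icc hd.le hb.2
    have hcomp : IsCompact (Set.Icc d b ∩ y ⁻¹' Set.Iic 0) :=
      isCompact_Icc.of_isClosed_subset
        ((hycont.mono hsub).preimage_isClosed_of_isClosed isClosed_Icc isClosed_Iic)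
        Set.inter_subset_left
    -- `t` is the first point at which `y` fails to be positive.
    obtain ⟨t, ⟨⟨hdt, htb⟩, hty⟩, hmin⟩ :=
      hcomp.exists_isLeast ⟨b, ⟨hdb, le_rfl⟩, not_lt.1 hneg⟩
    have ht : 0 < t := hd.trans_le hdt
    have htL : t ≤ L := htb.trans hb.2
    have hpre : ∀ x ∈ Set.Ioo 0 t, 0 < y x := by
      intro x hx
      by_contra hxn
      rcases lt_or_ge x d with hxd | hxd
      · exact hxn (hdpos x ⟨hx.1, hxd⟩ (hx.2.le.trans htL))
      · exact absurd (hmin ⟨⟨hxd, hx.2.le.trans htb⟩, not_lt.1 hxn⟩) (not_le.2 hx.2)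
    have hratio : ∀ x ∈ Set.Icc (t / 2) t, HasDerivWithinAt (fun z => y z / oddSol z)
        ((y' x * oddSol x - y x * oddSol' x) / oddSol x ^ 2) (Set.Icc (t / 2) t) x := by
      intro x hx
      have hx0 : 0 < x := by linarith [hx.1]
      exact ((h1 x ⟨hx0.le, hx.2.trans htL⟩).mono (Set.Icc_subset_Icc (by linarith) htL)).div
        (hasDerivAt_oddSol x).hasDerivWithinAt (oddSol_pos hx0).ne'
    have hmono : StrictMonoOn (fun z => y z / oddSol z) (Set.Icc (t / 2) t) := by
      refine strictMonoOn_of_hasDerivWithinAt_pos (convex_Icc _ _)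
        (fun x hx => (hratio x hx).continuousWithinAt)
        (fun x hx => (hratio x (interior_subset hx)).mono interior_subset) ?_
      intro x hx
      rw [interior_Icc] at hx
      have hx0 : 0 < x := by linarith [hx.1]
      exact div_pos (wronskian_pos hlam h1 h2 y0 hx0 (hx.2.le.trans htL)
        fun z hz => hpre z ⟨hz.1, hz.2.trans hx.2⟩) (pow_pos (oddSol_pos hx0) 2)
    have hlt := hmono ⟨le_rfl, by linarith⟩ ⟨by linarith, le_rfl⟩ (half_lt_self ht)
    have hl : 0 < y (t / 2) / oddSol (t / 2) :=
      div_pos (hpre _ ⟨by linarith, by linarith⟩) (oddSol_pos (by linarith))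
    have hr : y t / oddSol t ≤ 0 := div_nonpos_of_nonpos_of_nonneg hty (oddSol_pos ht).le
    exact absurd (hl.trans hlt) (not_lt.2 hr)
  refine ⟨hpos, ?_⟩
  have hW := wronskian_pos hlam h1 h2 y0 hL le_rfl fun x hx => hpos x ⟨hx.1, hx.2.le⟩
  have hg := oddSol_pos hL
  have hR := oddSol_robin hL1
  refine lt_of_mul_lt_mul_right ?_ hg.le
  have := mul_pos hL hW
  have e : L * (y' L * oddSol L - y L * oddSol' L)
      = L * y' L * oddSol L - y L * oddSol L := by
    linear_combination (-y L) * hR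
  linarith

/-- Uniqueness for the trivial initial data, from Grönwall's inequality applied to `(f, f')`. -/
lemma eq_zero_of_initial_value_zero {L lam : ℝ} (hlam : 0 < lam) {f f' : ℝ → ℝ}
    (h1 : ∀ x ∈ Set.Icc 0 L, HasDerivWithinAt f (f' x) (Set.Icc 0 L) x)
    (h2 : ∀ x ∈ Set.Icc 0 L, HasDerivWithinAt f'
      ((1 + lam * Real.cosh x ^ 2 - 2 / Real.cosh x ^ 2) * f x) (Set.Icc 0 L) x)
    (f0 : f 0 = 0) (f0' : f' 0 = 0) : ∀ x ∈ Set.Icc 0 L, f x = 0 := by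
  intro x hx
  have key := norm_le_gronwallBound_of_norm_deriv_right_le
    (f := fun z => (f z, f' z))
    (f' := fun z => (f' z, (1 + lam * Real.cosh z ^ 2 - 2 / Real.cosh z ^ 2) * f z))
    (δ := 0) (K := 3 + lam * Real.cosh L ^ 2) (ε := 0) (a := 0) (b := L)
    (fun z hz => ((h1 z hz).prodMk (h2 z hz)).continuousWithinAt)
    (fun z hz => ((h1 z ⟨hz.1, hz.2.le⟩).prodMk (h2 z ⟨hz.1, hz.2.le⟩)).mono_of_mem_nhdsWithin
      (Icc_mem_nhdsGE_of_mem hz))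
    (by simp [f0, f0']) ?_ x hx
  · rw [gronwallBound_ε0, zero_mul] at key
    exact congrArg Prod.fst (norm_le_zero_iff.1 key)
  · intro z hz
    have hz1 : 1 ≤ Real.cosh z ^ 2 := one_le_pow₀ (Real.one_le_cosh z)
    have hzL : Real.cosh z ^ 2 ≤ Real.cosh L ^ 2 := by
      have hL0 : 0 ≤ L := hz.1.trans hz.2.le
      have : Real.cosh z ≤ Real.cosh L :=
        Real.cosh_le_cosh.2 (by rw [abs_of_nonneg hz.1, abs_of_nonneg hL0]; exact hz.2.le)
      exact pow_le_pow_left₀ (Real.cosh_pos z).le this 2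
    have hq : 2 / Real.cosh z ^ 2 ≤ 2 := div_le_self zero_le_two hz1
    have hq0 : 0 ≤ 2 / Real.cosh z ^ 2 := by positivity
    have hlz : lam * Real.cosh z ^ 2 ≤ lam * Real.cosh L ^ 2 :=
      mul_le_mul_of_nonneg_left hzL hlam.le
    have hl0 : 0 ≤ lam * Real.cosh z ^ 2 := by positivity
    have habs : |1 + lam * Real.cosh z ^ 2 - 2 / Real.cosh z ^ 2|
        ≤ 3 + lam * Real.cosh L ^ 2 := abs_le.2 ⟨by linarith, by linarith⟩
    have hK : 0 ≤ 3 + lam * Real.cosh L ^ 2 := by positivity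
    rw [add_zero]
    refine norm_prod_le_iff.2 ⟨?_, ?_⟩
    · have : ‖f' z‖ ≤ ‖(f z, f' z)‖ := norm_snd_le (f z, f' z)
      refine this.trans (le_mul_of_one_le_left (norm_nonneg _) (by linarith))
    · have : ‖f z‖ ≤ ‖(f z, f' z)‖ := norm_fst_le (f z, f' z)
      rw [norm_mul]
      exact mul_le_mul habs this (norm_nonneg _) hK


/-- For every `λ > 0`, the odd solution of the mode-one equation
`y'' = (1 + λ cosh²x − 2/cosh²x) y`, `y 0 = 0`, `y' 0 = 1` is positive on `(0, L]` and
satisfies `L·y' L > y L`; in particular, for no `λ > 0` is there a nontrivial odd solution of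
the `m = 1` equation on `[-L, L]` with the Robin boundary conditions `f(±L) = ±L·f'(±L)`.
Here `L` is the unique positive real with `L·tanh L = 1`. -/
theorem no_odd_eigenvalue_mode_one
    (L : ℝ) (hL : 0 < L) (hL1 : L * Real.tanh L = 1) :
    (∀ lam : ℝ, 0 < lam → ∀ y y' : ℝ → ℝ,
      (∀ x ∈ Set.Icc 0 L, HasDerivWithinAt y (y' x) (Set.Icc 0 L) x) →
      (∀ x ∈ Set.Icc 0 L, HasDerivWithinAt y'
        ((1 + lam * Real.cosh x ^ 2 - 2 / Real.cosh x ^ 2) * y x) (Set.Icc 0 L) x) →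
      y 0 = 0 → y' 0 = 1 →
      (∀ x ∈ Set.Ioc 0 L, 0 < y x) ∧ y L < L * y' L) ∧
    (∀ lam : ℝ, 0 < lam → ∀ f f' : ℝ → ℝ,
      (∀ x ∈ Set.Icc (-L) L, HasDerivWithinAt f (f' x) (Set.Icc (-L) L) x) →
      (∀ x ∈ Set.Icc (-L) L, HasDerivWithinAt f'
        ((1 + lam * Real.cosh x ^ 2 - 2 / Real.cosh x ^ 2) * f x) (Set.Icc (-L) L) x) →
      (∀ x ∈ Set.Icc (-L) L, f (-x) = -f x) →
      f L = L * f' L → f (-L) = -L * f' (-L) →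
      ∀ x ∈ Set.Icc (-L) L, f x = 0) := by
  refine ⟨fun lam hlam y y' h1 h2 y0 y0' => pos_and_lt_of_initial_value hL hL1 hlam h1 h2 y0 y0',
    ?_⟩
  intro lam hlam f f' h1 h2 hodd hR _
  have hsub : Set.Icc 0 L ⊆ Set.Icc (-L) L := Set.Icc_subset_Icc_left (by linarith)
  have k1 : ∀ x ∈ Set.Icc 0 L, HasDerivWithinAt f (f' x) (Set.Icc 0 L) x :=
    fun x hx => (h1 x (hsub hx)).mono hsub
  have k2 : ∀ x ∈ Set.Icc 0 L, HasDerivWithinAt f'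
      ((1 + lam * Real.cosh x ^ 2 - 2 / Real.cosh x ^ 2) * f x) (Set.Icc 0 L) x :=
    fun x hx => (h2 x (hsub hx)).mono hsub
  have f0 : f 0 = 0 := by
    have := hodd 0 ⟨by linarith, hL.le⟩
    rw [neg_zero] at this
    linarith
  have f0' : f' 0 = 0 := by
    by_contra hc
    have := (pos_and_lt_of_initial_value (y := fun x => f x / f' 0) (y' := fun x => f' x / f' 0)
      hL hL1 hlam (fun x hx => (k1 x hx).div_const _)
      (fun x hx => ((k2 x hx).div_const _).congr_deriv (mul_div_assoc _ _ _))
      (by simp [f0]) (div_self hc)).2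
    rw [hR, mul_div_assoc] at this
    exact lt_irrefl _ this
  have hz := eq_zero_of_initial_value_zero hlam k1 k2 f0 f0'
  intro x hx
  rcases le_total 0 x with h | h
  · exact hz x ⟨h, hx.2⟩
  · have := hodd x hx
    rw [hz (-x) ⟨by linarith, by linarith [hx.1]⟩] at this
    linarith
end
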